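/- Let 0 < δ′ < δ″ < 1 and let u be an admissible map with ‖u‖ ≠ 0 and D_{δ″}(u) = 0. Then the rescaled map v = (δ′/δ″)·u satisfies D_{δ′}(v) = 0, ‖v‖ ≠ 0, and E(u) − E(v) > (1 − δ″)·r(δ″)²·(δ′/δ″)·(1 − δ′/δ″). (This yields strict monotone increase of the depth function d(δ) on (0,1].) -/

import Mathlib

open MeasureTheory Real Filter

/-- x-partial derivative of a map `u : ℝ² → ℝ³`. -/
noncomputable def pderivX (u : ℝ × ℝ → Fin 3 → ℝ) (p : ℝ × ℝ) : Fin 3 → ℝ :=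
  fderiv ℝ u p (1, 0)

/-- y-partial derivative of a map `u : ℝ² → ℝ³`. -/
noncomputable def pderivY (u : ℝ × ℝ → Fin 3 → ℝ) (p : ℝ × ℝ) : Fin 3 → ℝ :=
  fderiv ℝ u p (0, 1)

/-- Euclidean dot product on `ℝ³`. -/
def dot3 (a b : Fin 3 → ℝ) : ℝ := ∑ i, a i * b i

/-- Squared Dirichlet norm `‖u‖² = ∫_Ω |∇u|²`. -/
noncomputable def dirEnergy (Ω : Set (ℝ × ℝ)) (u : ℝ × ℝ → Fin 3 → ℝ) : ℝ :=
  ∫ p in Ω, (dot3 (pderivX u p) (pderivX u p) + dot3 (pderivY u p) (pderivY u p))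

/-- Dirichlet norm `‖u‖`. -/
noncomputable def dnorm (Ω : Set (ℝ × ℝ)) (u : ℝ × ℝ → Fin 3 → ℝ) : ℝ :=
  Real.sqrt (dirEnergy Ω u)

/-- Volume functional `V(u) = ∫_Ω u · (u_x ∧ u_y)`. -/
noncomputable def vol (Ω : Set (ℝ × ℝ)) (u : ℝ × ℝ → Fin 3 → ℝ) : ℝ :=
  ∫ p in Ω, dot3 (u p) (crossProduct (pderivX u p) (pderivY u p))

/-- An admissible map: smooth with compact support contained in `Ω`. -/
def IsAdmissible (Ω : Set (ℝ × ℝ)) (u : ℝ × ℝ → Fin 3 → ℝ) : Prop :=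
  ContDiff ℝ (⊤ : ℕ∞) u ∧ HasCompactSupport u ∧ tsupport u ⊆ Ω

/-- Energy functional `E(u) = (1/2)‖u‖² + (2H/3)·V(u)`. -/
noncomputable def Efun (Ω : Set (ℝ × ℝ)) (H : ℝ) (u : ℝ × ℝ → Fin 3 → ℝ) : ℝ :=
  (1 / 2) * dirEnergy Ω u + (2 * H / 3) * vol Ω u

/-- Modified Nehari functional `D_δ(u) = δ‖u‖² + 2H·V(u)`; `D = D₁`. -/
noncomputable def Dfun (Ω : Set (ℝ × ℝ)) (H δ : ℝ) (u : ℝ × ℝ → Fin 3 → ℝ) : ℝ :=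
  δ * dirEnergy Ω u + 2 * H * vol Ω u

/-- The radius `r(δ) = 2√(2π)·δ/H`. -/
noncomputable def rPW (H δ : ℝ) : ℝ := 2 * Real.sqrt (2 * Real.pi) * δ / H

/-- The coefficient `a(δ) = 1/2 − δ/3`. -/
noncomputable def aPW (δ : ℝ) : ℝ := 1 / 2 - δ / 3

open scoped ContDiff Convolution ENNReal Matrix NNReal Pointwise Topology

/-!
If `D_δ(u) = 0` then `H V(u) = -δ‖u‖²/2`, so `E(u) - E(t u)` equals `‖u‖²` times the explicit
polynomial `(1 - δ) t (1 - t) + (1 - t)² (1/2 - δ (1 - t)/3)` in `t` and `δ`. The second summand is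
positive for `0 < t < 1`, and `‖u‖² ≥ r(δ)²` is the sharp inequality `32π V(u)² ≤ ‖u‖⁶`.

The latter follows from the isoperimetric inequality `4π V(u)² ≤ A(u)³` for the area
`A(u) = ∫ |u_x ∧ u_y| ≤ ‖u‖²/2`. The cone `(l, x, y) ↦ l u(x, y)`, `0 < l ≤ 1`, covers the points of
space with an integer multiplicity `w`, where `∫ w = V(u)/3`, and by Stokes' theorem the variation
of `w` is at most `A(u)`. The sharp Sobolev inequality for functions of bounded variation bounds
`∫ |w|^(3/2)`, and `|w| ≤ |w|^(3/2)` because `w` is an integer. This Sobolev inequality comes, by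
slicing into level sets, from the Brunn–Minkowski inequality, and that one from the
Prékopa–Leindler inequality.
-/

section Lintegral

variable {α : Type*} [MeasurableSpace α] (μ : Measure α)

theorem antitone_measure_ofReal_lt (f : α → ℝ≥0∞) :
    Antitone fun t : ℝ ↦ μ {x | ENNReal.ofReal t < f x} :=
  fun _ _ hst ↦ measure_mono fun _ hx ↦ (ENNReal.ofReal_le_ofReal hst).trans_lt hx

theorem setLIntegral_Ioi_ofReal_lt (a : ℝ≥0∞) :
    ∫⁻ t in Set.Ioi (0 : ℝ), {t : ℝ | ENNReal.ofReal t < a}.indicator 1 t = a := by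
  have hm : MeasurableSet {t : ℝ | ENNReal.ofReal t < a} :=
    measurableSet_lt ENNReal.measurable_ofReal measurable_const
  rw [lintegral_indicator_one hm, Measure.restrict_apply hm]
  rcases eq_or_ne a ⊤ with rfl | ha
  · simp
  · have : {t : ℝ | ENNReal.ofReal t < a} ∩ Set.Ioi 0 = Set.Ioo 0 a.toReal := by
      ext t
      exact and_comm.trans (and_congr_right fun ht ↦
        ENNReal.ofReal_lt_iff_lt_toReal (Set.mem_Ioi.1 ht).le ha)
    rw [this, Real.volume_Ioo, sub_zero, ENNReal.ofReal_toReal ha]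

theorem lintegral_eq_setLIntegral_measure_ofReal_lt [SFinite μ] {f : α → ℝ≥0∞}
    (hf : Measurable f) :
    ∫⁻ x, f x ∂μ = ∫⁻ t in Set.Ioi (0 : ℝ), μ {x | ENNReal.ofReal t < f x} := by
  have hm : MeasurableSet {q : α × ℝ | ENNReal.ofReal q.2 < f q.1} :=
    measurableSet_lt (ENNReal.measurable_ofReal.comp measurable_snd) (hf.comp measurable_fst)
  calc ∫⁻ x, f x ∂μ
      = ∫⁻ x, (∫⁻ t in Set.Ioi (0 : ℝ),
          {q : α × ℝ | ENNReal.ofReal q.2 < f q.1}.indicator 1 (x, t)) ∂μ :=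
        lintegral_congr fun x ↦ (setLIntegral_Ioi_ofReal_lt (f x)).symm
    _ = ∫⁻ t in Set.Ioi (0 : ℝ), (∫⁻ x,
          {q : α × ℝ | ENNReal.ofReal q.2 < f q.1}.indicator 1 (x, t) ∂μ) :=
        lintegral_lintegral_swap (measurable_one.indicator hm).aemeasurable
    _ = ∫⁻ t in Set.Ioi (0 : ℝ), μ {x | ENNReal.ofReal t < f x} :=
        lintegral_congr fun t ↦
          lintegral_indicator_one (s := {x | ENNReal.ofReal t < f x})
            (measurableSet_lt measurable_const hf)

theorem tendsto_lintegral_min_natCast {f : α → ℝ≥0∞} (hf : Measurable f) :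
    Tendsto (fun n : ℕ ↦ ∫⁻ x, min (f x) n ∂μ) atTop (𝓝 (∫⁻ x, f x ∂μ)) := by
  refine lintegral_tendsto_of_tendsto_of_monotone
    (fun n ↦ (hf.min measurable_const).aemeasurable)
    (ae_of_all _ fun x m n hmn ↦ min_le_min le_rfl (by exact_mod_cast hmn))
    (ae_of_all _ fun x ↦ ?_)
  simpa using (tendsto_const_nhds (x := f x)).min ENNReal.tendsto_nat_nhds_top

end Lintegral

/-! ### The Prékopa–Leindler inequality -/

theorem volume_add_volume_le_volume_add_of_isCompact {K L : Set ℝ} (hK : IsCompact K)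
    (hL : IsCompact L) (hKn : K.Nonempty) (hLn : L.Nonempty) :
    volume K + volume L ≤ volume (K + L) := by
  obtain ⟨x, hxK, hx⟩ := hK.exists_isGreatest hKn
  obtain ⟨y, hyL, hy⟩ := hL.exists_isLeast hLn
  have hinter : volume ((x + ·) '' L ∩ (· + y) '' K) = 0 := by
    refine measure_mono_null (t := {x + y}) ?_ (by simp)
    rintro _ ⟨⟨w, hw, rfl⟩, z, hz, hzw⟩
    have hzx := hx hz
    have hyw := hy hw
    simp only [Set.mem_singleton_iff] at hzw ⊢
    linarith
  calc volume K + volume L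
      = volume ((x + ·) '' L) + volume ((· + y) '' K) := by simp [add_comm]
    _ = volume ((x + ·) '' L ∪ (· + y) '' K) :=
        (measure_union₀' (hL.image (by fun_prop)).measurableSet.nullMeasurableSet hinter).symm
    _ ≤ volume (K + L) := measure_mono <| Set.union_subset
        (Set.image_subset_iff.2 fun z hz ↦ Set.add_mem_add hxK hz)
        (Set.image_subset_iff.2 fun z hz ↦ Set.add_mem_add hz hyL)

theorem volume_add_volume_le_of_add_subset {A B C : Set ℝ} (hA : MeasurableSet A)
    (hB : MeasurableSet B) (hAn : A.Nonempty) (hBn : B.Nonempty) (hC : A + B ⊆ C) :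
    volume A + volume B ≤ volume C := by
  obtain ⟨a, ha⟩ := hAn
  obtain ⟨b, hb⟩ := hBn
  rw [hA.measure_eq_iSup_isCompact, hB.measure_eq_iSup_isCompact]
  simp only [iSup_and']
  refine ENNReal.biSup_add_biSup_le' ⟨∅, by simp⟩ ⟨∅, by simp⟩ ?_
  rintro K ⟨hKA, hK⟩ L ⟨hLB, hL⟩
  calc volume K + volume L ≤ volume (insert a K) + volume (insert b L) := by
        gcongr <;> exact Set.subset_insert _ _
    _ ≤ volume (insert a K + insert b L) :=
        volume_add_volume_le_volume_add_of_isCompact (hK.insert a) (hL.insert b)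
          (Set.insert_nonempty a K) (Set.insert_nonempty b L)
    _ ≤ volume C := measure_mono <|
        (Set.add_subset_add (Set.insert_subset ha hKA) (Set.insert_subset hb hLB)).trans hC

theorem ennreal_rpow_mul_rpow_le_add {a b : ℝ} (ha : 0 < a) (hb : 0 < b) (hab : a + b = 1)
    (x y : ℝ≥0∞) : x ^ a * y ^ b ≤ ENNReal.ofReal a * x + ENNReal.ofReal b * y := by
  have h := ENNReal.young_inequality (x ^ a) (y ^ b)
    (Real.HolderConjugate.inv_inv ha hb hab)
  simpa [← ENNReal.rpow_mul, ha.ne', hb.ne', ENNReal.ofReal_inv_of_pos, ha, hb, div_eq_mul_inv,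
    mul_comm] using h

/-- The Prékopa–Leindler inequality for a measure `μ` on a real vector space, as a property of `μ`:
it passes to products and linear images, which reduces Haar measures to Lebesgue measure on `ℝ`. -/
def SatisfiesPrekopaLeindler {E : Type*} [AddCommGroup E] [Module ℝ E] [MeasurableSpace E]
    (μ : Measure E) : Prop :=
  ∀ ⦃a b : ℝ⦄, 0 < a → 0 < b → a + b = 1 → ∀ ⦃f g h : E → ℝ≥0∞⦄,
    Measurable f → Measurable g → Measurable h →
    (∀ x y, f x ^ a * g y ^ b ≤ h (a • x + b • y)) →
    (∫⁻ x, f x ∂μ) ^ a * (∫⁻ x, g x ∂μ) ^ b ≤ ∫⁻ x, h x ∂μ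

namespace SatisfiesPrekopaLeindler

section Real

variable {a b : ℝ} {f g h : ℝ → ℝ≥0∞}

theorem volume_superlevel_add_le (ha : 0 < a) (hb : 0 < b) (hab : a + b = 1)
    (hf : Measurable f) (hg : Measurable g) {t : ℝ≥0∞} (htf : t < ⨆ x, f x) (htg : t < ⨆ x, g x)
    (H : ∀ x y, f x ^ a * g y ^ b ≤ h (a • x + b • y)) :
    ENNReal.ofReal a * volume {x | t < f x} + ENNReal.ofReal b * volume {x | t < g x} ≤
      volume {x | t < h x} := by
  have hsub : a • {x | t < f x} + b • {x | t < g x} ⊆ {x | t < h x} := by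
    rintro _ ⟨_, ⟨x, hx, rfl⟩, _, ⟨y, hy, rfl⟩, rfl⟩
    calc t = t ^ a * t ^ b := by
          rw [← ENNReal.rpow_add_of_nonneg _ _ ha.le hb.le, hab, ENNReal.rpow_one]
      _ < f x ^ a * g y ^ b :=
          ENNReal.mul_lt_mul (ENNReal.rpow_lt_rpow hx ha) (ENNReal.rpow_lt_rpow hy hb)
      _ ≤ h (a • x + b • y) := H x y
  have hle := volume_add_volume_le_of_add_subset
    ((measurableSet_lt measurable_const hf).const_smul₀ a)
    ((measurableSet_lt measurable_const hg).const_smul₀ b)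
    (Set.Nonempty.smul_set (lt_iSup_iff.1 htf)) (Set.Nonempty.smul_set (lt_iSup_iff.1 htg)) hsub
  simpa [Measure.addHaar_smul_of_nonneg _ ha.le, Measure.addHaar_smul_of_nonneg _ hb.le] using hle

theorem add_lintegral_le_of_iSup_eq_one (ha : 0 < a) (hb : 0 < b) (hab : a + b = 1)
    (hf : Measurable f) (hg : Measurable g) (hh : Measurable h)
    (hf1 : ⨆ x, f x = 1) (hg1 : ⨆ x, g x = 1)
    (H : ∀ x y, f x ^ a * g y ^ b ≤ h (a • x + b • y)) :
    ENNReal.ofReal a * (∫⁻ x, f x) + ENNReal.ofReal b * (∫⁻ x, g x) ≤ ∫⁻ x, h x := by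
  simp only [lintegral_eq_setLIntegral_measure_ofReal_lt volume hf,
    lintegral_eq_setLIntegral_measure_ofReal_lt volume hg,
    lintegral_eq_setLIntegral_measure_ofReal_lt volume hh]
  rw [← lintegral_const_mul _ (antitone_measure_ofReal_lt volume f).measurable,
    ← lintegral_const_mul _ (antitone_measure_ofReal_lt volume g).measurable,
    ← lintegral_add_left ((antitone_measure_ofReal_lt volume f).measurable.const_mul _)]
  refine lintegral_mono fun t ↦ ?_
  rcases lt_or_ge (ENNReal.ofReal t) 1 with ht | ht
  · exact volume_superlevel_add_le ha hb hab hf hg (hf1 ▸ ht) (hg1 ▸ ht) H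
  · have hempty {k : ℝ → ℝ≥0∞} (hk : ⨆ x, k x = 1) : {x | ENNReal.ofReal t < k x} = ∅ :=
      Set.eq_empty_of_forall_notMem fun x hx ↦
        (ht.trans_lt hx).not_ge ((le_iSup k x).trans hk.le)
    simp [hempty hf1, hempty hg1]

theorem real_of_iSup_ne_top (ha : 0 < a) (hb : 0 < b) (hab : a + b = 1)
    (hf : Measurable f) (hg : Measurable g) (hh : Measurable h)
    (hft : ⨆ x, f x ≠ ⊤) (hgt : ⨆ x, g x ≠ ⊤)
    (H : ∀ x y, f x ^ a * g y ^ b ≤ h (a • x + b • y)) :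
    (∫⁻ x, f x) ^ a * (∫⁻ x, g x) ^ b ≤ ∫⁻ x, h x := by
  rcases eq_or_ne (⨆ x, f x) 0 with hf0 | hf0
  · simp [iSup_eq_bot.1 hf0, ENNReal.zero_rpow_of_pos ha]
  rcases eq_or_ne (⨆ x, g x) 0 with hg0 | hg0
  · simp [iSup_eq_bot.1 hg0, ENNReal.zero_rpow_of_pos hb]
  set c := (⨆ x, f x)⁻¹ with hc
  set d := (⨆ x, g x)⁻¹ with hd
  have hK0 : c ^ a * d ^ b ≠ 0 := by simp [hc, hd, hf0, hg0, hft, hgt]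
  have hKt : c ^ a * d ^ b ≠ ⊤ := ENNReal.mul_ne_top
    (ENNReal.rpow_ne_top_of_nonneg ha.le (by simpa [hc] using hf0))
    (ENNReal.rpow_ne_top_of_nonneg hb.le (by simpa [hd] using hg0))
  have hscale (x y : ℝ≥0∞) : (c * x) ^ a * (d * y) ^ b = c ^ a * d ^ b * (x ^ a * y ^ b) := by
    rw [ENNReal.mul_rpow_of_nonneg _ _ ha.le, ENNReal.mul_rpow_of_nonneg _ _ hb.le]
    ring
  refine (ENNReal.mul_le_mul_iff_right hK0 hKt).1 ?_
  calc c ^ a * d ^ b * ((∫⁻ x, f x) ^ a * (∫⁻ x, g x) ^ b)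
      = (∫⁻ x, c * f x) ^ a * (∫⁻ x, d * g x) ^ b := by
        rw [lintegral_const_mul _ hf, lintegral_const_mul _ hg, hscale]
    _ ≤ ENNReal.ofReal a * (∫⁻ x, c * f x) + ENNReal.ofReal b * (∫⁻ x, d * g x) :=
        ennreal_rpow_mul_rpow_le_add ha hb hab _ _
    _ ≤ ∫⁻ x, c ^ a * d ^ b * h x := by
        refine add_lintegral_le_of_iSup_eq_one ha hb hab (hf.const_mul c) (hg.const_mul d)
          (hh.const_mul _) ?_ ?_ fun x y ↦ ?_
        · rw [← ENNReal.mul_iSup, ENNReal.inv_mul_cancel hf0 hft]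
        · rw [← ENNReal.mul_iSup, ENNReal.inv_mul_cancel hg0 hgt]
        · rw [hscale]
          gcongr
          exact H x y
    _ = c ^ a * d ^ b * ∫⁻ x, h x := lintegral_const_mul _ hh

theorem real : SatisfiesPrekopaLeindler (volume : Measure ℝ) := by
  intro a b ha hb hab f g h hf hg hh H
  rcases eq_or_ne (∫⁻ x, f x) 0 with hf0 | hf0
  · simp [hf0, ENNReal.zero_rpow_of_pos ha]
  rcases eq_or_ne (∫⁻ x, g x) 0 with hg0 | hg0
  · simp [hg0, ENNReal.zero_rpow_of_pos hb]
  have hlim := ENNReal.Tendsto.mul ((tendsto_lintegral_min_natCast volume hf).ennrpow_const a)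
    (Or.inl (by simp [hf0, ha, ha.le]))
    ((tendsto_lintegral_min_natCast volume hg).ennrpow_const b)
    (Or.inl (by simp [hg0, hb, hb.le]))
  refine le_of_tendsto' hlim fun n ↦ ?_
  have hbdd (k : ℝ → ℝ≥0∞) : ⨆ x, min (k x) n ≠ ⊤ :=
    ne_top_of_le_ne_top (ENNReal.natCast_ne_top n) (iSup_le fun x ↦ min_le_right _ _)
  refine real_of_iSup_ne_top ha hb hab (hf.min measurable_const) (hg.min measurable_const) hh
    (hbdd f) (hbdd g) fun x y ↦ (mul_le_mul' ?_ ?_).trans (H x y)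
  · exact ENNReal.rpow_le_rpow (min_le_left _ _) ha.le
  · exact ENNReal.rpow_le_rpow (min_le_left _ _) hb.le

end Real

section Transfer

variable {E F : Type*} [AddCommGroup E] [Module ℝ E] [MeasurableSpace E]
  [AddCommGroup F] [Module ℝ F] [MeasurableSpace F] {μ : Measure E} {ν : Measure F}

theorem of_subsingleton [Subsingleton E] (μ : Measure E) : SatisfiesPrekopaLeindler μ := by
  intro a b ha hb hab f g h _ _ _ H
  have hconst (k : E → ℝ≥0∞) : ∫⁻ x, k x ∂μ = k 0 * μ Set.univ := by
    rw [← lintegral_const]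
    exact lintegral_congr fun x ↦ by rw [Subsingleton.elim x 0]
  rw [hconst f, hconst g, hconst h, ENNReal.mul_rpow_of_nonneg _ _ ha.le,
    ENNReal.mul_rpow_of_nonneg _ _ hb.le, mul_mul_mul_comm,
    ← ENNReal.rpow_add_of_nonneg _ _ ha.le hb.le, hab, ENNReal.rpow_one]
  gcongr
  simpa using H 0 0

theorem smul (hμ : SatisfiesPrekopaLeindler μ) (c : ℝ≥0∞) :
    SatisfiesPrekopaLeindler (c • μ) := by
  intro a b ha hb hab f g h hf hg hh H
  simp only [lintegral_smul_measure, smul_eq_mul]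
  rw [ENNReal.mul_rpow_of_nonneg _ _ ha.le, ENNReal.mul_rpow_of_nonneg _ _ hb.le,
    mul_mul_mul_comm, ← ENNReal.rpow_add_of_nonneg _ _ ha.le hb.le, hab, ENNReal.rpow_one]
  gcongr
  exact hμ ha hb hab hf hg hh H

theorem map (hμ : SatisfiesPrekopaLeindler μ) {L : E →ₗ[ℝ] F} (hL : Measurable L) :
    SatisfiesPrekopaLeindler (μ.map L) := by
  intro a b ha hb hab f g h hf hg hh H
  rw [lintegral_map hf hL, lintegral_map hg hL, lintegral_map hh hL]
  exact hμ ha hb hab (hf.comp hL) (hg.comp hL) (hh.comp hL) fun x y ↦ by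
    simpa using H (L x) (L y)

theorem prod [SFinite ν] (hμ : SatisfiesPrekopaLeindler μ)
    (hν : SatisfiesPrekopaLeindler ν) : SatisfiesPrekopaLeindler (μ.prod ν) := by
  intro a b ha hb hab f g h hf hg hh H
  rw [lintegral_prod _ hf.aemeasurable, lintegral_prod _ hg.aemeasurable,
    lintegral_prod _ hh.aemeasurable]
  refine hμ ha hb hab hf.lintegral_prod_right' hg.lintegral_prod_right'
    hh.lintegral_prod_right' fun s t ↦ ?_
  exact hν ha hb hab (hf.comp measurable_prodMk_left) (hg.comp measurable_prodMk_left)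
    (hh.comp measurable_prodMk_left) fun x y ↦ H (s, x) (t, y)

end Transfer

section Haar

variable {E F : Type*} [NormedAddCommGroup E] [NormedSpace ℝ E]
  [MeasurableSpace E] [BorelSpace E] [NormedAddCommGroup F] [NormedSpace ℝ F]
  [FiniteDimensional ℝ F] [MeasurableSpace F] [BorelSpace F]

theorem of_continuousLinearEquiv {μ : Measure E} [μ.IsAddHaarMeasure]
    (hμ : SatisfiesPrekopaLeindler μ) (e : E ≃L[ℝ] F) (ν : Measure F) [ν.IsAddHaarMeasure] :
    SatisfiesPrekopaLeindler ν := by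
  have : (μ.map e).IsAddHaarMeasure := e.isAddHaarMeasure_map μ
  rw [Measure.isAddLeftInvariant_eq_smul ν (μ.map e)]
  exact (hμ.map (L := e.toLinearEquiv.toLinearMap) e.continuous.measurable).smul _

theorem volume_pi_fin : ∀ n : ℕ, SatisfiesPrekopaLeindler (volume : Measure (Fin n → ℝ))
  | 0 => of_subsingleton _
  | n + 1 => (real.prod (volume_pi_fin n)).of_continuousLinearEquiv
      (Fin.consEquivL ℝ fun _ : Fin (n + 1) ↦ ℝ) _

theorem addHaar [FiniteDimensional ℝ E] (μ : Measure E) [μ.IsAddHaarMeasure] :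
    SatisfiesPrekopaLeindler μ :=
  (volume_pi_fin (Module.finrank ℝ E)).of_continuousLinearEquiv
    (Module.finBasis ℝ E).equivFunL.symm μ

end Haar

end SatisfiesPrekopaLeindler

/-! ### The Brunn–Minkowski inequality -/

section BrunnMinkowski

variable {E : Type*} [NormedAddCommGroup E] [NormedSpace ℝ E] [FiniteDimensional ℝ E]
  [MeasurableSpace E] [BorelSpace E] {μ : Measure E} [μ.IsAddHaarMeasure] {A B C : Set E}

theorem brunn_minkowski_multiplicative {a b : ℝ} (ha : 0 < a) (hb : 0 < b) (hab : a + b = 1)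
    (hA : MeasurableSet A) (hB : MeasurableSet B) (hC : MeasurableSet C)
    (hABC : a • A + b • B ⊆ C) : μ A ^ a * μ B ^ b ≤ μ C := by
  simp only [← lintegral_indicator_one hA, ← lintegral_indicator_one hB,
    ← lintegral_indicator_one hC]
  refine SatisfiesPrekopaLeindler.addHaar μ ha hb hab (measurable_one.indicator hA)
    (measurable_one.indicator hB) (measurable_one.indicator hC) fun x y ↦ ?_
  by_cases hx : x ∈ A
  · by_cases hy : y ∈ B
    · have hxy : a • x + b • y ∈ C :=
        hABC (Set.add_mem_add (Set.smul_mem_smul_set hx) (Set.smul_mem_smul_set hy))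
      simp [hx, hy, hxy]
    · simp [hy, ENNReal.zero_rpow_of_pos hb]
  · simp [hx, ENNReal.zero_rpow_of_pos ha]

omit [NormedSpace ℝ E] [FiniteDimensional ℝ E] in
theorem measure_le_of_add_subset (hB : B.Nonempty) (hABC : A + B ⊆ C) : μ A ≤ μ C := by
  obtain ⟨b, hb⟩ := hB
  calc μ A = μ ((· + b) '' A) := by simp
    _ ≤ μ C := measure_mono <| (Set.image_subset_iff.2 fun x hx ↦ hABC (Set.add_mem_add hx hb))

theorem ofReal_add_pow_finrank_le_measure {a b : ℝ} (ha : 0 < a) (hb : 0 < b)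
    (hA : MeasurableSet A) (hB : MeasurableSet B) (hC : MeasurableSet C) (hABC : A + B ⊆ C)
    (hAa : ENNReal.ofReal a ^ Module.finrank ℝ E ≤ μ A)
    (hBb : ENNReal.ofReal b ^ Module.finrank ℝ E ≤ μ B) :
    ENNReal.ofReal (a + b) ^ Module.finrank ℝ E ≤ μ C := by
  have hs : 0 < a + b := add_pos ha hb
  have hscale {c : ℝ} (hc : 0 < c) {S : Set E}
      (hS : ENNReal.ofReal c ^ Module.finrank ℝ E ≤ μ S) :
      ENNReal.ofReal (a + b) ^ Module.finrank ℝ E ≤ μ (((a + b) / c) • S) := by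
    have hsc : 0 ≤ (a + b) / c := by positivity
    rw [Measure.addHaar_smul_of_nonneg _ hsc, ENNReal.ofReal_pow hsc]
    calc ENNReal.ofReal (a + b) ^ Module.finrank ℝ E
        = ENNReal.ofReal ((a + b) / c) ^ Module.finrank ℝ E *
            ENNReal.ofReal c ^ Module.finrank ℝ E := by
          rw [← mul_pow, ← ENNReal.ofReal_mul hsc, div_mul_cancel₀ _ hc.ne']
      _ ≤ _ := by gcongr
  have hsum : a / (a + b) + b / (a + b) = 1 := by field_simp
  have hcancel {c : ℝ} (hc : 0 < c) (S : Set E) : (c / (a + b)) • ((a + b) / c) • S = S := by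
    rw [smul_smul, div_mul_div_cancel₀ hs.ne', div_self hc.ne', one_smul]
  calc ENNReal.ofReal (a + b) ^ Module.finrank ℝ E
      = (ENNReal.ofReal (a + b) ^ Module.finrank ℝ E) ^ (a / (a + b)) *
          (ENNReal.ofReal (a + b) ^ Module.finrank ℝ E) ^ (b / (a + b)) := by
        rw [← ENNReal.rpow_add_of_nonneg _ _ (by positivity) (by positivity), hsum,
          ENNReal.rpow_one]
    _ ≤ μ (((a + b) / a) • A) ^ (a / (a + b)) * μ (((a + b) / b) • B) ^ (b / (a + b)) := by
        gcongr
        exacts [hscale ha hAa, hscale hb hBb]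
    _ ≤ μ C := brunn_minkowski_multiplicative (by positivity) (by positivity) hsum
        (hA.const_smul₀ _) (hB.const_smul₀ _) hC (by rwa [hcancel ha, hcancel hb])

theorem brunn_minkowski [Nontrivial E] (hA : MeasurableSet A) (hB : MeasurableSet B)
    (hC : MeasurableSet C) (hAn : A.Nonempty) (hBn : B.Nonempty) (hABC : A + B ⊆ C) :
    μ A ^ (Module.finrank ℝ E : ℝ)⁻¹ + μ B ^ (Module.finrank ℝ E : ℝ)⁻¹ ≤
      μ C ^ (Module.finrank ℝ E : ℝ)⁻¹ := by
  have hn : (0 : ℝ) < Module.finrank ℝ E := by exact_mod_cast Module.finrank_pos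
  have hAC : μ A ≤ μ C := measure_le_of_add_subset hBn hABC
  have hBC : μ B ≤ μ C := measure_le_of_add_subset hAn (add_comm A B ▸ hABC)
  rcases eq_or_ne (μ C) ⊤ with hCt | hCt
  · simp [hCt, ENNReal.top_rpow_of_pos (inv_pos.2 hn)]
  rcases eq_or_ne (μ A) 0 with hA0 | hA0
  · rw [hA0, ENNReal.zero_rpow_of_pos (inv_pos.2 hn), zero_add]
    gcongr
  rcases eq_or_ne (μ B) 0 with hB0 | hB0
  · rw [hB0, ENNReal.zero_rpow_of_pos (inv_pos.2 hn), add_zero]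
    gcongr
  have hroot {S : Set E} (hS0 : μ S ≠ 0) (hSC : μ S ≤ μ C) : ∃ c : ℝ, 0 < c ∧
      ENNReal.ofReal c = μ S ^ (Module.finrank ℝ E : ℝ)⁻¹ := by
    have hSt : μ S ≠ ⊤ := ne_top_of_le_ne_top hCt hSC
    have hrt : μ S ^ (Module.finrank ℝ E : ℝ)⁻¹ ≠ ⊤ :=
      ENNReal.rpow_ne_top_of_nonneg (inv_nonneg.2 hn.le) hSt
    exact ⟨_, ENNReal.toReal_pos (ENNReal.rpow_pos (pos_iff_ne_zero.2 hS0) hSt).ne' hrt,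
      ENNReal.ofReal_toReal hrt⟩
  obtain ⟨a, ha, haA⟩ := hroot hA0 hAC
  obtain ⟨b, hb, hbB⟩ := hroot hB0 hBC
  have hpow (x : ℝ≥0∞) : (x ^ (Module.finrank ℝ E : ℝ)⁻¹) ^ Module.finrank ℝ E = x := by
    rw [← ENNReal.rpow_natCast, ENNReal.rpow_inv_rpow hn.ne']
  have hle := ofReal_add_pow_finrank_le_measure (μ := μ) ha hb hA hB hC hABC
    (by rw [haA, hpow]) (by rw [hbB, hpow])
  rwa [ENNReal.ofReal_add ha.le hb.le, haA, hbB, ← ENNReal.rpow_natCast,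
    ← ENNReal.le_rpow_inv_iff hn] at hle

theorem measure_add_finrank_mul_le_of_add_smul_subset [Nontrivial E] {p : ℝ}
    (hp : (Module.finrank ℝ E : ℝ).HolderConjugate p) {K : Set E} {t : ℝ} (ht : 0 ≤ t)
    (hA : MeasurableSet A) (hK : MeasurableSet K) (hC : MeasurableSet C) (hKn : K.Nonempty)
    (hAKC : A + t • K ⊆ C) :
    μ A + Module.finrank ℝ E * (ENNReal.ofReal t * μ K ^ (Module.finrank ℝ E : ℝ)⁻¹) *
      μ A ^ p⁻¹ ≤ μ C := by
  have hn := hp.pos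
  rcases A.eq_empty_or_nonempty with rfl | hAn
  · simp [hp.symm.pos]
  set x := μ A ^ (Module.finrank ℝ E : ℝ)⁻¹ with hx
  have hxn : x ^ Module.finrank ℝ E = μ A := by
    rw [hx, ← ENNReal.rpow_natCast, ENNReal.rpow_inv_rpow hn.ne']
  have hxp : x ^ (Module.finrank ℝ E - 1) = μ A ^ p⁻¹ := by
    rw [hx, ← ENNReal.rpow_natCast, ← ENNReal.rpow_mul, Nat.cast_sub Module.finrank_pos,
      Nat.cast_one, ← hp.one_sub_inv]
    congr 1
    field_simp
  have htK : μ (t • K) ^ (Module.finrank ℝ E : ℝ)⁻¹ =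
      ENNReal.ofReal t * μ K ^ (Module.finrank ℝ E : ℝ)⁻¹ := by
    rw [Measure.addHaar_smul_of_nonneg _ ht, ENNReal.mul_rpow_of_nonneg _ _ (inv_pos.2 hn).le,
      ENNReal.ofReal_pow ht, ← ENNReal.rpow_natCast, ENNReal.rpow_rpow_inv hn.ne']
  calc μ A + Module.finrank ℝ E * (ENNReal.ofReal t * μ K ^ (Module.finrank ℝ E : ℝ)⁻¹) *
        μ A ^ p⁻¹
      = x ^ Module.finrank ℝ E + Module.finrank ℝ E * x ^ (Module.finrank ℝ E - 1) *
          μ (t • K) ^ (Module.finrank ℝ E : ℝ)⁻¹ := by rw [hxn, hxp, htK]; ring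
    _ ≤ (x + μ (t • K) ^ (Module.finrank ℝ E : ℝ)⁻¹) ^ Module.finrank ℝ E :=
        pow_add_mul_le_add_pow_of_sq_nonneg bot_le bot_le bot_le bot_le _
    _ ≤ (μ C ^ (Module.finrank ℝ E : ℝ)⁻¹) ^ Module.finrank ℝ E := by
        gcongr
        exact brunn_minkowski hA (hK.const_smul₀ t) hC hAn hKn.smul_set hAKC
    _ = μ C := by rw [← ENNReal.rpow_natCast, ENNReal.rpow_inv_rpow hn.ne']

end BrunnMinkowski

/-! ### The anisotropic Sobolev inequality -/

section LayerCake

variable {α : Type*} [MeasurableSpace α] {μ : Measure α}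

theorem setLIntegral_le_lintegral_rpow_mul_measure_rpow {p q : ℝ} (hpq : p.HolderConjugate q)
    {g : α → ℝ≥0∞} (hg : Measurable g) (s : Set α) :
    ∫⁻ x in s, g x ∂μ ≤ (∫⁻ x, g x ^ q ∂μ) ^ q⁻¹ * μ s ^ p⁻¹ := by
  have h := ENNReal.lintegral_mul_le_Lp_mul_Lq (μ.restrict s) hpq.symm hg.aemeasurable
    (aemeasurable_const (b := 1))
  simp only [Pi.mul_apply, mul_one, ENNReal.one_rpow, lintegral_const, one_mul,
    Measure.restrict_apply_univ, one_div] at h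
  refine h.trans ?_
  gcongr
  · exact hpq.symm.inv_nonneg
  · exact Measure.restrict_le_self

theorem lintegral_rpow_rpow_inv_le_setLIntegral_measure [SFinite μ] {p : ℝ} (hp : 1 < p)
    {f : α → ℝ≥0∞} (hf : Measurable f) (hft : ∫⁻ x, f x ^ p ∂μ ≠ ⊤) :
    (∫⁻ x, f x ^ p ∂μ) ^ p⁻¹ ≤
      ∫⁻ t in Set.Ioi (0 : ℝ), μ {x | ENNReal.ofReal t < f x} ^ p⁻¹ := by
  rcases eq_or_ne (∫⁻ x, f x ^ p ∂μ) 0 with h0 | h0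
  · simp [h0, inv_pos.2 (zero_lt_one.trans hp)]
  have hpq : p.HolderConjugate p.conjExponent := .conjExponent hp
  set q := p.conjExponent
  have hg : Measurable fun x ↦ f x ^ (p - 1) := hf.pow_const _
  have hlevel (t : ℝ) : MeasurableSet {x | ENNReal.ofReal t < f x} :=
    measurableSet_lt measurable_const hf
  have hanti := (antitone_measure_ofReal_lt μ f).measurable
  have key : ∫⁻ x, f x ^ p ∂μ ≤ (∫⁻ x, f x ^ p ∂μ) ^ q⁻¹ *
      ∫⁻ t in Set.Ioi (0 : ℝ), μ {x | ENNReal.ofReal t < f x} ^ p⁻¹ := by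
    calc ∫⁻ x, f x ^ p ∂μ
        = ∫⁻ x, f x ∂μ.withDensity fun x ↦ f x ^ (p - 1) := by
          rw [lintegral_withDensity_eq_lintegral_mul _ hg hf]
          refine lintegral_congr fun x ↦ ?_
          rw [Pi.mul_apply, ← ENNReal.rpow_one (f x), ← ENNReal.rpow_mul, one_mul,
            ← ENNReal.rpow_mul, one_mul, ← ENNReal.rpow_add_of_nonneg _ _ (by linarith) zero_le_one,
            sub_add_cancel]
      _ = ∫⁻ t in Set.Ioi (0 : ℝ), ∫⁻ x in {x | ENNReal.ofReal t < f x}, f x ^ (p - 1) ∂μ := by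
          rw [lintegral_eq_setLIntegral_measure_ofReal_lt _ hf]
          simp only [withDensity_apply _ (hlevel _)]
      _ ≤ ∫⁻ t in Set.Ioi (0 : ℝ), (∫⁻ x, f x ^ p ∂μ) ^ q⁻¹ *
            μ {x | ENNReal.ofReal t < f x} ^ p⁻¹ := by
          refine lintegral_mono fun t ↦ ?_
          simpa only [← ENNReal.rpow_mul, hpq.sub_one_mul_conj] using
            setLIntegral_le_lintegral_rpow_mul_measure_rpow hpq hg {x | ENNReal.ofReal t < f x}
      _ = _ := lintegral_const_mul _ (hanti.pow_const _)
  have hq0 : (∫⁻ x, f x ^ p ∂μ) ^ q⁻¹ ≠ 0 := by simp [h0, hft]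
  have hqt : (∫⁻ x, f x ^ p ∂μ) ^ q⁻¹ ≠ ⊤ :=
    ENNReal.rpow_ne_top_of_nonneg hpq.symm.inv_nonneg hft
  refine (ENNReal.mul_le_mul_iff_right hq0 hqt).1 (le_of_eq_of_le ?_ key)
  rw [← ENNReal.rpow_add _ _ h0 hft, hpq.symm.inv_add_inv_eq_one, ENNReal.rpow_one]

theorem lintegral_enorm_rpow_ne_top_of_hasCompactSupport {X F : Type*} [TopologicalSpace X]
    [MeasurableSpace X] [OpensMeasurableSpace X] [NormedAddCommGroup F] {ν : Measure X}
    [IsFiniteMeasureOnCompacts ν] {f : X → F} (hf : Continuous f)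
    (hfc : HasCompactSupport f) {r : ℝ} (hr : 0 < r) : ∫⁻ z, ‖f z‖ₑ ^ r ∂ν ≠ ⊤ := by
  have hLp := hf.memLp_of_hasCompactSupport (μ := ν) (p := ENNReal.ofReal r) hfc
  simpa [ENNReal.toReal_ofReal hr.le] using (lintegral_rpow_enorm_lt_top_of_eLpNorm_lt_top
    (by simpa using hr) ENNReal.ofReal_ne_top hLp.eLpNorm_lt_top).ne

end LayerCake

section FDeriv

variable {E F : Type*} [NormedAddCommGroup E] [NormedSpace ℝ E] [NormedAddCommGroup F]
  [NormedSpace ℝ F] {f : E → F} {K : Set E}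

theorem eventually_norm_sub_smul_sub_add_fderiv_le (hf : ContDiff ℝ 1 f)
    (hfc : HasCompactSupport f) (hK : Bornology.IsBounded K) {ε : ℝ} (hε : 0 < ε) :
    ∀ᶠ t in 𝓝[>] (0 : ℝ), ∀ w ∈ K, ∀ y,
      ‖f (y - t • w) - f y + t • fderiv ℝ f y w‖ ≤ t * ε := by
  obtain ⟨R, hR, hKR⟩ := hK.exists_pos_norm_le
  obtain ⟨δ, hδ, hfδ⟩ := Metric.uniformContinuous_iff.1
    ((hfc.fderiv ℝ).uniformContinuous_of_continuous (hf.continuous_fderiv one_ne_zero))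
    (ε / R) (by positivity)
  filter_upwards [Ioo_mem_nhdsGT (show 0 < δ / R by positivity)] with t ht w hw y
  have htw : ‖t • w‖ ≤ t * R := by
    rw [norm_smul, Real.norm_of_nonneg ht.1.le]
    exact mul_le_mul_of_nonneg_left (hKR w hw) ht.1.le
  have hmem : y - t • w ∈ Metric.ball y δ := by
    simpa using htw.trans_lt ((lt_div_iff₀ hR).1 ht.2)
  have hmv := (convex_ball y δ).norm_image_sub_le_of_norm_fderiv_le'
    (𝕜 := ℝ) (f := f) (φ := fderiv ℝ f y) (C := ε / R)
    (fun z _ ↦ (hf.differentiable one_ne_zero) z)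
    (fun z hz ↦ (dist_eq_norm (fderiv ℝ f z) _ ▸ hfδ (Metric.mem_ball.1 hz)).le)
    (Metric.mem_ball_self hδ) hmem
  calc ‖f (y - t • w) - f y + t • fderiv ℝ f y w‖
      = ‖f (y - t • w) - f y - fderiv ℝ f y (y - t • w - y)‖ := by simp
    _ ≤ ε / R * ‖y - t • w - y‖ := hmv
    _ ≤ ε / R * (t * R) := by
        gcongr
        simpa using htw
    _ = t * ε := by field_simp

theorem eventually_enorm_sub_smul_le (hf : ContDiff ℝ 1 f) (hfc : HasCompactSupport f)
    (hK : Bornology.IsBounded K) {ε : ℝ≥0} (hε : 0 < ε) :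
    ∀ᶠ t in 𝓝[>] (0 : ℝ), ∀ w ∈ K, ∀ y,
      ‖f (y - t • w)‖ₑ ≤ ‖f y‖ₑ + ENNReal.ofReal t * (‖fderiv ℝ f y w‖ₑ +
        (Metric.cthickening 1 (tsupport f)).indicator (fun _ ↦ (ε : ℝ≥0∞)) y) := by
  obtain ⟨R, hR, hKR⟩ := hK.exists_pos_norm_le
  filter_upwards [Ioo_mem_nhdsGT (show 0 < 1 / R by positivity),
    eventually_norm_sub_smul_sub_add_fderiv_le hf hfc hK hε] with t ht hdiff w hw y
  by_cases hy : y ∈ Metric.cthickening 1 (tsupport f)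
  · have hnorm : ‖f (y - t • w) - f y + t • fderiv ℝ f y w‖ₑ ≤ ENNReal.ofReal t * ε := by
      rw [← ENNReal.ofReal_coe_nnreal, ← ENNReal.ofReal_mul ht.1.le, ← ofReal_norm]
      exact ENNReal.ofReal_le_ofReal (hdiff w hw y)
    calc ‖f (y - t • w)‖ₑ
        = ‖f y - t • fderiv ℝ f y w + (f (y - t • w) - f y + t • fderiv ℝ f y w)‖ₑ := by
          congr 1; abel
      _ ≤ ‖f y‖ₑ + ‖t • fderiv ℝ f y w‖ₑ + ENNReal.ofReal t * ε :=
          (enorm_add_le _ _).trans (add_le_add (enorm_sub_le) hnorm)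
      _ = _ := by
          rw [enorm_smul, Real.enorm_of_nonneg ht.1.le, Set.indicator_of_mem hy]
          ring
  · have hzero : f (y - t • w) = 0 := by
      by_contra hne
      refine hy (Metric.mem_cthickening_of_dist_le y (y - t • w) 1 _
        (subset_tsupport f hne) ?_)
      rw [dist_eq_norm, sub_sub_cancel, norm_smul, Real.norm_of_nonneg ht.1.le]
      calc t * ‖w‖ ≤ 1 / R * R := by
            gcongr
            exacts [ht.2.le, hKR w hw]
        _ = 1 := by field_simp
    simp [hzero]

end FDeriv

section Sobolev

variable {E F : Type*} [NormedAddCommGroup E] [NormedSpace ℝ E] [FiniteDimensional ℝ E]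
  [Nontrivial E] [MeasurableSpace E] [BorelSpace E] [NormedAddCommGroup F] [NormedSpace ℝ F]
  {μ : Measure E} [μ.IsAddHaarMeasure] {K : Set E} {p : ℝ}

theorem lintegral_add_le_lintegral_of_le_add_smul
    (hp : (Module.finrank ℝ E : ℝ).HolderConjugate p) (hK : MeasurableSet K) (hKn : K.Nonempty)
    {t : ℝ} (ht : 0 ≤ t) {f k : E → ℝ≥0∞} (hf : Measurable f) (hk : Measurable k)
    (hfk : ∀ w ∈ K, ∀ y, f (y - t • w) ≤ k y) :
    (∫⁻ z, f z ∂μ) + ENNReal.ofReal t * (Module.finrank ℝ E *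
      μ K ^ (Module.finrank ℝ E : ℝ)⁻¹ *
        ∫⁻ s in Set.Ioi (0 : ℝ), μ {z | ENNReal.ofReal s < f z} ^ p⁻¹) ≤ ∫⁻ z, k z ∂μ := by
  have hanti := (antitone_measure_ofReal_lt μ f).measurable
  rw [lintegral_eq_setLIntegral_measure_ofReal_lt μ hf,
    lintegral_eq_setLIntegral_measure_ofReal_lt μ hk, ← mul_assoc,
    ← lintegral_const_mul _ (hanti.pow_const _), ← lintegral_add_left hanti]
  refine lintegral_mono fun s ↦ ?_
  have hsub : {z | ENNReal.ofReal s < f z} + t • K ⊆ {z | ENNReal.ofReal s < k z} := by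
    rintro _ ⟨z, hz, _, ⟨w, hw, rfl⟩, rfl⟩
    exact lt_of_lt_of_le hz (by simpa using hfk w hw (z + t • w))
  have h := measure_add_finrank_mul_le_of_add_smul_subset (μ := μ) hp ht
    (measurableSet_lt measurable_const hf) hK (measurableSet_lt measurable_const hk) hKn hsub
  rwa [mul_left_comm (Module.finrank ℝ E : ℝ≥0∞)] at h

theorem finrank_mul_measure_rpow_mul_setLIntegral_measure_le
    (hp : (Module.finrank ℝ E : ℝ).HolderConjugate p) (hK : MeasurableSet K) (hKn : K.Nonempty)
    (hKb : Bornology.IsBounded K) {f : E → F} (hf : ContDiff ℝ 1 f) (hfc : HasCompactSupport f)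
    {G : E → ℝ≥0∞} (hG : Measurable G) (hfG : ∀ z, ∀ w ∈ K, ‖fderiv ℝ f z w‖ₑ ≤ G z) :
    Module.finrank ℝ E * μ K ^ (Module.finrank ℝ E : ℝ)⁻¹ *
      ∫⁻ s in Set.Ioi (0 : ℝ), μ {z | ENNReal.ofReal s < ‖f z‖ₑ} ^ p⁻¹ ≤ ∫⁻ z, G z ∂μ := by
  have hfm : Measurable fun z ↦ ‖f z‖ₑ := hf.continuous.enorm.measurable
  have hft : ∫⁻ z, ‖f z‖ₑ ∂μ ≠ ⊤ := by
    simpa using lintegral_enorm_rpow_ne_top_of_hasCompactSupport (ν := μ) hf.continuous hfc one_pos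
  set S := Metric.cthickening 1 (tsupport f)
  have hS : IsCompact S := hfc.isCompact.cthickening
  set I := ∫⁻ s in Set.Ioi (0 : ℝ), μ {z | ENNReal.ofReal s < ‖f z‖ₑ} ^ p⁻¹
  have hI (ε : ℝ≥0) (hε : 0 < ε) :
      Module.finrank ℝ E * μ K ^ (Module.finrank ℝ E : ℝ)⁻¹ * I ≤ (∫⁻ z, G z ∂μ) + ε * μ S := by
    obtain ⟨t, hle, ht : 0 < t⟩ := ((eventually_enorm_sub_smul_le hf hfc hKb hε).and
      self_mem_nhdsWithin).exists
    have hSm : Measurable (S.indicator fun _ ↦ (ε : ℝ≥0∞)) :=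
      measurable_const.indicator hS.measurableSet
    have hGS : Measurable fun y ↦ G y + S.indicator (fun _ ↦ (ε : ℝ≥0∞)) y := hG.add hSm
    have h := lintegral_add_le_lintegral_of_le_add_smul (μ := μ)
      (k := fun y ↦ ‖f y‖ₑ + ENNReal.ofReal t * (G y + S.indicator (fun _ ↦ (ε : ℝ≥0∞)) y)) hp hK
      hKn ht.le hfm (hfm.add (hGS.const_mul _)) fun w hw y ↦
        (hle w hw y).trans (by gcongr; exact hfG y w hw)
    rw [lintegral_add_left hfm, lintegral_const_mul _ hGS, lintegral_add_left hG,
      lintegral_indicator_const hS.measurableSet] at h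
    exact (ENNReal.mul_le_mul_iff_right (by simpa using ht) ENNReal.ofReal_ne_top).1
      ((ENNReal.add_le_add_iff_left hft).1 h)
  have hlim : Tendsto (fun ε : ℝ≥0 ↦ (∫⁻ z, G z ∂μ) + ε * μ S) (𝓝[>] 0)
      (𝓝 ((∫⁻ z, G z ∂μ) + (0 : ℝ≥0) * μ S)) :=
    tendsto_nhdsWithin_of_tendsto_nhds <| tendsto_const_nhds.add <|
      ENNReal.Tendsto.mul_const (ENNReal.tendsto_coe.2 tendsto_id)
        (Or.inr hS.measure_lt_top.ne)
  simpa using ge_of_tendsto hlim (eventually_nhdsWithin_of_forall hI)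

theorem finrank_mul_measure_rpow_mul_lintegral_le (hp : (Module.finrank ℝ E : ℝ).HolderConjugate p)
    (hK : MeasurableSet K) (hKb : Bornology.IsBounded K) {f : E → F} (hf : ContDiff ℝ 1 f)
    (hfc : HasCompactSupport f) {G : E → ℝ≥0∞} (hG : Measurable G)
    (hfG : ∀ z, ∀ w ∈ K, ‖fderiv ℝ f z w‖ₑ ≤ G z) :
    Module.finrank ℝ E * μ K ^ (Module.finrank ℝ E : ℝ)⁻¹ * (∫⁻ z, ‖f z‖ₑ ^ p ∂μ) ^ p⁻¹ ≤
      ∫⁻ z, G z ∂μ := by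
  rcases K.eq_empty_or_nonempty with rfl | hKn
  · simp [hp.pos]
  calc Module.finrank ℝ E * μ K ^ (Module.finrank ℝ E : ℝ)⁻¹ * (∫⁻ z, ‖f z‖ₑ ^ p ∂μ) ^ p⁻¹
      ≤ Module.finrank ℝ E * μ K ^ (Module.finrank ℝ E : ℝ)⁻¹ *
          ∫⁻ s in Set.Ioi (0 : ℝ), μ {z | ENNReal.ofReal s < ‖f z‖ₑ} ^ p⁻¹ := by
        gcongr
        exact lintegral_rpow_rpow_inv_le_setLIntegral_measure hp.symm.lt
          hf.continuous.enorm.measurable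
          (lintegral_enorm_rpow_ne_top_of_hasCompactSupport hf.continuous hfc hp.symm.pos)
    _ ≤ ∫⁻ z, G z ∂μ :=
        finrank_mul_measure_rpow_mul_setLIntegral_measure_le hp hK hKn hKb hf hfc hG hfG

end Sobolev

theorem mul_lintegral_rpow_le_of_ae_tendsto {α : Type*} [MeasurableSpace α] {μ : Measure α} {p : ℝ}
    (hp : 0 ≤ p) {c M : ℝ≥0∞} (hc : c ≠ ⊤) {f : ℕ → α → ℝ≥0∞} {g : α → ℝ≥0∞}
    (hf : ∀ j, Measurable (f j)) (hlim : ∀ᵐ z ∂μ, Tendsto (fun j ↦ f j z) atTop (𝓝 (g z)))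
    (hbound : ∀ j, c * (∫⁻ z, f j z ^ p ∂μ) ^ p⁻¹ ≤ M) :
    c * (∫⁻ z, g z ^ p ∂μ) ^ p⁻¹ ≤ M := by
  have hmono : Monotone fun x : ℝ≥0∞ ↦ c * x ^ p⁻¹ := fun x y hxy ↦ by
    dsimp only
    gcongr
  have hcont : Continuous fun x : ℝ≥0∞ ↦ c * x ^ p⁻¹ :=
    (ENNReal.continuous_const_mul hc).comp ENNReal.continuous_rpow_const
  calc c * (∫⁻ z, g z ^ p ∂μ) ^ p⁻¹
      = c * (∫⁻ z, liminf (fun j ↦ f j z ^ p) atTop ∂μ) ^ p⁻¹ := by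
        congr 2
        refine lintegral_congr_ae (hlim.mono fun z hz ↦ ?_)
        exact ((ENNReal.continuous_rpow_const.tendsto _).comp hz).liminf_eq.symm
    _ ≤ c * (liminf (fun j ↦ ∫⁻ z, f j z ^ p ∂μ) atTop) ^ p⁻¹ :=
        hmono (lintegral_liminf_le fun j ↦ (hf j).pow_const _)
    _ = liminf (fun j ↦ c * (∫⁻ z, f j z ^ p ∂μ) ^ p⁻¹) atTop :=
        hmono.map_liminf_of_continuousAt _ hcont.continuousAt
    _ ≤ M := (liminf_le_liminf (Eventually.of_forall hbound)).trans_eq (liminf_const _)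

section Variation

variable {E : Type*} [NormedAddCommGroup E] [NormedSpace ℝ E] [MeasurableSpace E]

/-- The measure `ν` bounds the distributional derivatives of `w` in the directions `k ∈ K`:
`|∫ ∂ₖφ w dμ| ≤ ∫ |φ| dν` for all test functions `φ`. With `K` the unit ball and `ν` finite, this
says that `w` has bounded variation and total variation at most `ν`. -/
def IsVariationBound (μ : Measure E) (K : Set E) (w : E → ℝ) (ν : Measure E) : Prop :=
  ∀ φ : E → ℝ, ContDiff ℝ ∞ φ → HasCompactSupport φ → ∀ k ∈ K,
    ‖∫ x, fderiv ℝ φ x k * w x ∂μ‖ₑ ≤ ∫⁻ x, ‖φ x‖ₑ ∂ν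

namespace IsVariationBound

variable [FiniteDimensional ℝ E] [BorelSpace E] {μ ν : Measure E} [μ.IsAddHaarMeasure]
  {K : Set E} {w : E → ℝ}

theorem enorm_fderiv_convolution_le (h : IsVariationBound μ K w ν) (hw : LocallyIntegrable w μ)
    {φ : E → ℝ} (hφ : ContDiff ℝ ∞ φ) (hφc : HasCompactSupport φ) (z : E) {k : E} (hk : k ∈ K) :
    ‖fderiv ℝ (φ ⋆[.lsmul ℝ ℝ, μ] w) z k‖ₑ ≤ ∫⁻ x, ‖φ (z - x)‖ₑ ∂ν := by
  have hφ1 : ContDiff ℝ 1 φ := hφ.of_le (by simp)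
  have hderiv (x : E) : fderiv ℝ (fun x ↦ φ (z - x)) x k = -fderiv ℝ φ (z - x) k := by
    have hcomp := ((hφ1.differentiable one_ne_zero) (z - x)).hasFDerivAt.comp x
      ((hasFDerivAt_id x).const_sub z)
    simpa [Function.comp_def] using congr($(hcomp.fderiv) k)
  have hint := ((hφc.fderiv ℝ).convolutionExists_left
    ((ContinuousLinearMap.lsmul ℝ ℝ).precompL E) (hφ1.continuous_fderiv one_ne_zero) hw
      z).integrable_swap
  have hconv : fderiv ℝ (φ ⋆[.lsmul ℝ ℝ, μ] w) z k =
      -∫ x, fderiv ℝ (fun x ↦ φ (z - x)) x k * w x ∂μ := by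
    rw [(hφc.hasFDerivAt_convolution_left _ hφ1 hw z).fderiv, convolution_eq_swap,
      ContinuousLinearMap.integral_apply hint, ← integral_neg]
    simp [hderiv]
  rw [hconv, enorm_neg]
  exact h _ (hφ.comp (contDiff_const.sub contDiff_id))
    (hφc.comp_homeomorph (Homeomorph.subLeft z)) k hk

theorem lintegral_convolution_rpow_le [Nontrivial E] [SFinite ν] {p : ℝ}
    (h : IsVariationBound μ K w ν) (hp : (Module.finrank ℝ E : ℝ).HolderConjugate p)
    (hK : MeasurableSet K) (hKb : Bornology.IsBounded K) (hw : LocallyIntegrable w μ)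
    (hwc : HasCompactSupport w) {φ : E → ℝ} (hφ : ContDiff ℝ ∞ φ) (hφc : HasCompactSupport φ) :
    Module.finrank ℝ E * μ K ^ (Module.finrank ℝ E : ℝ)⁻¹ *
      (∫⁻ z, ‖(φ ⋆[.lsmul ℝ ℝ, μ] w) z‖ₑ ^ p ∂μ) ^ p⁻¹ ≤ (∫⁻ z, ‖φ z‖ₑ ∂μ) * ν Set.univ := by
  have hmeas : Measurable fun q : E × E ↦ ‖φ (q.1 - q.2)‖ₑ :=
    (hφ.continuous.comp (continuous_fst.sub continuous_snd)).enorm.measurable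
  calc _ ≤ ∫⁻ z, ∫⁻ x, ‖φ (z - x)‖ₑ ∂ν ∂μ :=
        finrank_mul_measure_rpow_mul_lintegral_le hp hK hKb
          (hφc.contDiff_convolution_left _ (hφ.of_le (by simp)) hw) (hφc.convolution _ hwc)
          hmeas.lintegral_prod_right' fun z k hk ↦ h.enorm_fderiv_convolution_le hw hφ hφc z hk
    _ = ∫⁻ x, ∫⁻ z, ‖φ (z - x)‖ₑ ∂μ ∂ν := lintegral_lintegral_swap hmeas.aemeasurable
    _ = _ := by
        simp only [lintegral_sub_right_eq_self (fun z ↦ ‖φ z‖ₑ), lintegral_const]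

theorem lintegral_rpow_le [Nontrivial E] [SFinite ν] {p : ℝ}
    (h : IsVariationBound μ K w ν) (hp : (Module.finrank ℝ E : ℝ).HolderConjugate p)
    (hK : MeasurableSet K) (hKb : Bornology.IsBounded K) (hw : LocallyIntegrable w μ)
    (hwc : HasCompactSupport w) :
    Module.finrank ℝ E * μ K ^ (Module.finrank ℝ E : ℝ)⁻¹ * (∫⁻ z, ‖w z‖ₑ ^ p ∂μ) ^ p⁻¹ ≤
      ν Set.univ := by
  let φ (j : ℕ) : ContDiffBump (0 : E) :=
    ⟨1 / (j + 1) / 2, 1 / (j + 1), by positivity, half_lt_self (by positivity)⟩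
  let f (j : ℕ) : E → ℝ := (φ j).normed μ ⋆[.lsmul ℝ ℝ, μ] w
  have hf (j : ℕ) : Measurable fun z ↦ ‖f j z‖ₑ :=
    ((φ j).hasCompactSupport_normed.contDiff_convolution_left (n := 0) _ (φ j).contDiff_normed
      hw).continuous.enorm.measurable
  have hlim : ∀ᵐ z ∂μ, Tendsto (fun j ↦ f j z) atTop (𝓝 (w z)) :=
    ContDiffBump.ae_convolution_tendsto_right_of_locallyIntegrable (K := 2)
      tendsto_one_div_add_atTop_nhds_zero_nat
      (Eventually.of_forall fun j ↦ (mul_div_cancel₀ _ two_ne_zero).ge) hw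
  have hmass (j : ℕ) : ∫⁻ z, ‖(φ j).normed μ z‖ₑ ∂μ = 1 := by
    rw [lintegral_enorm_of_nonneg (φ j).nonneg_normed,
      ← ofReal_integral_eq_lintegral_ofReal (φ j).integrable_normed
        (ae_of_all _ (φ j).nonneg_normed), (φ j).integral_normed, ENNReal.ofReal_one]
  have hc : Module.finrank ℝ E * μ K ^ (Module.finrank ℝ E : ℝ)⁻¹ ≠ ⊤ :=
    ENNReal.mul_ne_top (ENNReal.natCast_ne_top _)
      (ENNReal.rpow_ne_top_of_nonneg hp.inv_nonneg hKb.measure_lt_top.ne)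
  refine mul_lintegral_rpow_le_of_ae_tendsto hp.symm.nonneg hc hf
    (hlim.mono fun z hz ↦ hz.enorm) fun j ↦ ?_
  simpa only [hmass, one_mul] using
    h.lintegral_convolution_rpow_le hp hK hKb hw hwc (φ j).contDiff_normed
      ((φ j).hasCompactSupport_normed (μ := μ))

end IsVariationBound

end Variation

/-! ### The area formula with multiplicity -/

section AreaFormula

theorem tsum_indicator_image_eq_encard {α β : Type*} {f : α → β} {s : Set α} {t : ℕ → Set α}
    (ht : Pairwise (Function.onFun Disjoint t)) (hst : s ⊆ ⋃ n, t n)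
    (hf : ∀ n, Set.InjOn f (s ∩ t n)) (z : β) :
    ∑' n, (f '' (s ∩ t n)).indicator (1 : β → ℝ≥0∞) z = (s ∩ f ⁻¹' {z}).encard := by
  choose! i hi using fun q (hq : q ∈ s) ↦ Set.mem_iUnion.1 (hst hq)
  have hindex (n : ℕ) (q : α) (hq : q ∈ s) (hqn : q ∈ t n) : i q = n :=
    ht.eq (Set.not_disjoint_iff.2 ⟨q, hi q hq, hqn⟩)
  have himage : {n | z ∈ f '' (s ∩ t n)} = i '' (s ∩ f ⁻¹' {z}) := by
    ext n
    constructor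
    · rintro ⟨q, ⟨hq, hqn⟩, rfl⟩
      exact ⟨q, ⟨hq, rfl⟩, hindex n q hq hqn⟩
    · rintro ⟨q, ⟨hq, hqz⟩, rfl⟩
      exact ⟨q, ⟨hq, hi q hq⟩, hqz⟩
  have hinj : Set.InjOn i (s ∩ f ⁻¹' {z}) := fun q hq q' hq' hqq' ↦
    hf (i q) ⟨hq.1, hi q hq.1⟩ ⟨hq'.1, hqq' ▸ hi q' hq'.1⟩ (hq.2.trans hq'.2.symm)
  rw [← hinj.encard_image, ← himage, ← ENNReal.tsum_set_one, tsum_subtype _ fun _ ↦ (1 : ℝ≥0∞)]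
  rfl

theorem coe_ncard_eq_toReal_encard {α : Type*} (s : Set α) :
    (s.ncard : ℝ) = (s.encard : ℝ≥0∞).toReal := by
  rcases s.finite_or_infinite with hs | hs
  · simp [← hs.cast_ncard_eq]
  · simp [hs.ncard, hs.encard_eq]

theorem setIntegral_mul_eq_sub_abs {α : Type*} [MeasurableSpace α] {μ : Measure α} {s : Set α}
    {g J : α → ℝ} (hs : MeasurableSet s) (hJ : Measurable J)
    (hgJ : IntegrableOn (fun q ↦ g q * J q) s μ) :
    ∫ q in s, g q * J q ∂μ = (∫ q in s ∩ {q | 0 < J q}, g q * |J q| ∂μ) -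
      ∫ q in s ∩ {q | J q < 0}, g q * |J q| ∂μ := by
  have hpos : MeasurableSet {q | 0 < J q} := measurableSet_lt measurable_const hJ
  have hneg : MeasurableSet {q | J q < 0} := measurableSet_lt hJ measurable_const
  have hdiff : ∫ q in s \ {q | 0 < J q}, g q * J q ∂μ = ∫ q in s ∩ {q | J q < 0}, g q * J q ∂μ := by
    refine setIntegral_eq_of_subset_of_forall_sdiff_eq_zero (hs.diff hpos)
      (fun q (hq : q ∈ s ∧ J q < 0) ↦ ⟨hq.1, hq.2.not_gt⟩) fun q hq ↦ ?_
    have hq0 : J q = 0 := le_antisymm (not_lt.1 hq.1.2) (not_lt.1 fun h ↦ hq.2 ⟨hq.1.1, h⟩)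
    rw [hq0, mul_zero]
  rw [← integral_inter_add_sdiff hpos hgJ, hdiff, sub_eq_add_neg, ← integral_neg]
  congr 1
  · exact setIntegral_congr_fun (hs.inter hpos) fun q (hq : q ∈ s ∧ 0 < J q) ↦ by
      simp only [abs_of_pos hq.2]
  · exact setIntegral_congr_fun (hs.inter hneg) fun q (hq : q ∈ s ∧ J q < 0) ↦ by
      simp only [abs_of_neg hq.2, mul_neg, neg_neg]

variable {E : Type*} [NormedAddCommGroup E] [NormedSpace ℝ E] [FiniteDimensional ℝ E]
  [MeasurableSpace E] [BorelSpace E] {F : E → E} {F' : E → E →L[ℝ] E} {s : Set E}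

theorem exists_partition_injOn_of_hasFDerivWithinAt
    (hF : ∀ q ∈ s, HasFDerivWithinAt F (F' q) s q) (hdet : ∀ q ∈ s, (F' q).det ≠ 0) :
    ∃ t : ℕ → Set E, Pairwise (Function.onFun Disjoint t) ∧ (∀ n, MeasurableSet (t n)) ∧
      s ⊆ ⋃ n, t n ∧ ∀ n, Set.InjOn F (s ∩ t n) := by
  have hradius (A : E →L[ℝ] E) : ∃ c : ℝ≥0, c ≠ 0 ∧
      (A.det ≠ 0 → ∀ t, ApproximatesLinearOn F A t c → Set.InjOn F t) := by
    rcases subsingleton_or_nontrivial E with hE | hE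
    · exact ⟨1, one_ne_zero, fun _ t _ ↦ (Function.injective_of_subsingleton F).injOn⟩
    by_cases hA : A.det = 0
    · exact ⟨1, one_ne_zero, fun h ↦ (h hA).elim⟩
    set B := A.toContinuousLinearEquivOfDetNeZero hA
    have hB : 0 < ‖(B.symm : E →L[ℝ] E)‖₊⁻¹ / 2 := by
      have := B.nnnorm_symm_pos
      positivity
    refine ⟨_, hB.ne', fun _ t ht ↦ ?_⟩
    rw [← A.coe_toContinuousLinearEquivOfDetNeZero hA] at ht
    exact ht.injOn (Or.inr (NNReal.half_lt_self (by simpa using hB.ne')))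
  choose r hr0 hr using hradius
  obtain ⟨t, A, htd, htm, hst, happrox, hA⟩ :=
    exists_partition_approximatesLinearOn_of_hasFDerivWithinAt F s F' hF r hr0
  refine ⟨t, htd, htm, hst, fun n x hx ↦ ?_⟩
  obtain ⟨y, hy, hAy⟩ := hA ⟨x, hx.1⟩ n
  exact hr _ (hAy ▸ hdet y hy) _ (happrox n) hx

variable {μ : Measure E} [μ.IsAddHaarMeasure]

theorem measurable_encard_inter_preimage (hs : MeasurableSet s)
    (hF : ∀ q ∈ s, HasFDerivWithinAt F (F' q) s q) (hdet : ∀ q ∈ s, (F' q).det ≠ 0) :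
    Measurable fun z ↦ ((s ∩ F ⁻¹' {z}).encard : ℝ≥0∞) := by
  obtain ⟨t, htd, htm, hst, hinj⟩ := exists_partition_injOn_of_hasFDerivWithinAt hF hdet
  simp only [← tsum_indicator_image_eq_encard htd hst hinj]
  exact Measurable.tsum fun n ↦ measurable_one.indicator <|
    measurable_image_of_fderivWithin (hs.inter (htm n))
      (fun q hq ↦ (hF q hq.1).mono Set.inter_subset_left) (hinj n)

theorem lintegral_mul_encard_inter_preimage (hs : MeasurableSet s)
    (hF : ∀ q ∈ s, HasFDerivWithinAt F (F' q) s q) (hdet : ∀ q ∈ s, (F' q).det ≠ 0)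
    {ψ : E → ℝ≥0∞} (hψ : Measurable ψ) :
    ∫⁻ z, ψ z * (s ∩ F ⁻¹' {z}).encard ∂μ =
      ∫⁻ q in s, ENNReal.ofReal |(F' q).det| * ψ (F q) ∂μ := by
  obtain ⟨t, htd, htm, hst, hinj⟩ := exists_partition_injOn_of_hasFDerivWithinAt hF hdet
  have hm (n : ℕ) : MeasurableSet (s ∩ t n) := hs.inter (htm n)
  have hF' (n : ℕ) : ∀ q ∈ s ∩ t n, HasFDerivWithinAt F (F' q) (s ∩ t n) q :=
    fun q hq ↦ (hF q hq.1).mono Set.inter_subset_left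
  have himage (n : ℕ) : MeasurableSet (F '' (s ∩ t n)) :=
    measurable_image_of_fderivWithin (hm n) (hF' n) (hinj n)
  calc ∫⁻ z, ψ z * (s ∩ F ⁻¹' {z}).encard ∂μ
      = ∫⁻ z, ∑' n, (F '' (s ∩ t n)).indicator ψ z ∂μ := by
        refine lintegral_congr fun z ↦ ?_
        rw [← tsum_indicator_image_eq_encard htd hst hinj, ← ENNReal.tsum_mul_left]
        refine tsum_congr fun n ↦ ?_
        by_cases hz : z ∈ F '' (s ∩ t n) <;> simp only [Set.indicator, hz, if_true, if_false,
          Pi.one_apply, mul_one, mul_zero]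
    _ = ∑' n, ∫⁻ z in F '' (s ∩ t n), ψ z ∂μ := by
        rw [lintegral_tsum fun n ↦ (hψ.indicator (himage n)).aemeasurable]
        simp only [lintegral_indicator (himage _)]
    _ = ∑' n, ∫⁻ q in s ∩ t n, ENNReal.ofReal |(F' q).det| * ψ (F q) ∂μ :=
        tsum_congr fun n ↦ lintegral_image_eq_lintegral_abs_det_fderiv_mul μ (hm n) (hF' n)
          (hinj n) ψ
    _ = ∫⁻ q in s, ENNReal.ofReal |(F' q).det| * ψ (F q) ∂μ := by
        rw [← lintegral_iUnion hm
          (htd.mono fun i j h ↦ h.mono Set.inter_subset_right Set.inter_subset_right),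
          ← Set.inter_iUnion, Set.inter_eq_left.2 hst]

theorem lintegral_encard_inter_preimage_ne_top (hs : MeasurableSet s)
    (hF : ∀ q ∈ s, HasFDerivWithinAt F (F' q) s q) (hdet : ∀ q ∈ s, (F' q).det ≠ 0)
    (hint : IntegrableOn (fun q ↦ (F' q).det) s μ) :
    ∫⁻ z, (s ∩ F ⁻¹' {z}).encard ∂μ ≠ ⊤ := by
  have h := lintegral_mul_encard_inter_preimage (μ := μ) hs hF hdet measurable_one
  simp only [Pi.one_apply, one_mul, mul_one] at h
  exact h ▸ hint.abs.lintegral_lt_top.ne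

theorem integrable_ncard_inter_preimage (hs : MeasurableSet s)
    (hF : ∀ q ∈ s, HasFDerivWithinAt F (F' q) s q) (hdet : ∀ q ∈ s, (F' q).det ≠ 0)
    (hint : IntegrableOn (fun q ↦ (F' q).det) s μ) :
    Integrable (fun z ↦ ((s ∩ F ⁻¹' {z}).ncard : ℝ)) μ := by
  simp only [coe_ncard_eq_toReal_encard]
  exact integrable_toReal_of_lintegral_ne_top
    (measurable_encard_inter_preimage hs hF hdet).aemeasurable
    (lintegral_encard_inter_preimage_ne_top hs hF hdet hint)

theorem integral_mul_ncard_inter_preimage (hs : MeasurableSet s)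
    (hF : ∀ q ∈ s, HasFDerivWithinAt F (F' q) s q) (hdet : ∀ q ∈ s, (F' q).det ≠ 0)
    (hint : IntegrableOn (fun q ↦ (F' q).det) s μ) {φ : E → ℝ} (hφ : Measurable φ) :
    ∫ z, φ z * (s ∩ F ⁻¹' {z}).ncard ∂μ = ∫ q in s, φ (F q) * |(F' q).det| ∂μ := by
  have hN := measurable_encard_inter_preimage hs hF hdet
  have hJ := aemeasurable_ofReal_abs_det_fderivWithin μ hs hF
  have hFm : AEMeasurable F (μ.restrict s) :=
    ContinuousOn.aemeasurable (fun q hq ↦ (hF q hq).continuousWithinAt) hs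
  have hFm' := hFm.mono_ac (withDensity_absolutelyContinuous _ fun q ↦ ENNReal.ofReal |(F' q).det|)
  have hmap : μ.withDensity (fun z ↦ (s ∩ F ⁻¹' {z}).encard) =
      ((μ.restrict s).withDensity fun q ↦ ENNReal.ofReal |(F' q).det|).map F := by
    refine Measure.ext_of_lintegral _ fun ψ hψ ↦ ?_
    have hψF : AEMeasurable (fun q ↦ ψ (F q)) (μ.restrict s) := hψ.comp_aemeasurable hFm
    rw [lintegral_map' hψ.aemeasurable hFm', lintegral_withDensity_eq_lintegral_mul _ hN hψ,
      lintegral_withDensity_eq_lintegral_mul₀ hJ hψF]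
    simpa only [Pi.mul_apply, mul_comm] using
      lintegral_mul_encard_inter_preimage hs hF hdet hψ
  calc ∫ z, φ z * (s ∩ F ⁻¹' {z}).ncard ∂μ
      = ∫ z, φ z ∂μ.withDensity (fun z ↦ (s ∩ F ⁻¹' {z}).encard) := by
        rw [integral_withDensity_eq_integral_toReal_smul hN (ae_lt_top hN
          (lintegral_encard_inter_preimage_ne_top hs hF hdet hint))]
        simp only [coe_ncard_eq_toReal_encard, smul_eq_mul, mul_comm]
    _ = ∫ q, φ (F q) ∂(μ.restrict s).withDensity (fun q ↦ ENNReal.ofReal |(F' q).det|) := by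
        rw [hmap, integral_map hFm' hφ.aestronglyMeasurable]
    _ = ∫ q in s, φ (F q) * |(F' q).det| ∂μ := by
        rw [integral_withDensity_eq_integral_toReal_smul₀ hJ
          (ae_of_all _ fun _ ↦ ENNReal.ofReal_lt_top)]
        simp only [smul_eq_mul, ENNReal.toReal_ofReal (abs_nonneg _), mul_comm]

variable (F F' s) in
/-- The number of preimages of `z` in `s` under `F`, each counted with the sign of the determinant
of the derivative `F'` there: for almost every `z`, the Brouwer degree. An infinite number of
preimages of one sign counts as `0`. -/
noncomputable def signedPreimageCount (z : E) : ℤ :=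
  (s ∩ {q | 0 < (F' q).det} ∩ F ⁻¹' {z}).ncard - (s ∩ {q | (F' q).det < 0} ∩ F ⁻¹' {z}).ncard

omit [FiniteDimensional ℝ E] [MeasurableSpace E] [BorelSpace E] in
theorem signedPreimageCount_eq_zero {z : E} (hz : z ∉ F '' s) :
    signedPreimageCount F F' s z = 0 := by
  have hempty (P : Set E) : s ∩ P ∩ F ⁻¹' {z} = ∅ :=
    Set.eq_empty_of_forall_notMem fun q hq ↦ hz ⟨q, hq.1.1, hq.2⟩
  simp [signedPreimageCount, hempty]

theorem integrable_signedPreimageCount (hs : MeasurableSet s)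
    (hF : ∀ q ∈ s, HasFDerivWithinAt F (F' q) s q) (hF' : Measurable fun q ↦ (F' q).det)
    (hint : IntegrableOn (fun q ↦ (F' q).det) s μ) :
    Integrable (fun z ↦ (signedPreimageCount F F' s z : ℝ)) μ := by
  have hcount {P : Set E} (hP : MeasurableSet P) (hdet : ∀ q ∈ P, (F' q).det ≠ 0) :
      Integrable (fun z ↦ ((s ∩ P ∩ F ⁻¹' {z}).ncard : ℝ)) μ :=
    integrable_ncard_inter_preimage (hs.inter hP)
      (fun q hq ↦ (hF q hq.1).mono Set.inter_subset_left) (fun q hq ↦ hdet q hq.2)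
      (hint.mono_set Set.inter_subset_left)
  simp only [signedPreimageCount, Int.cast_sub, Int.cast_natCast]
  exact (hcount (measurableSet_lt measurable_const hF') fun q hq ↦ ne_of_gt hq).sub
    (hcount (measurableSet_lt hF' measurable_const) fun q hq ↦ ne_of_lt hq)

theorem integral_mul_signedPreimageCount (hs : MeasurableSet s)
    (hF : ∀ q ∈ s, HasFDerivWithinAt F (F' q) s q) (hF' : Measurable fun q ↦ (F' q).det)
    (hint : IntegrableOn (fun q ↦ (F' q).det) s μ) {φ : E → ℝ} (hφ : Measurable φ) {C : ℝ}
    (hφC : ∀ z, ‖φ z‖ ≤ C) :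
    ∫ z, φ z * signedPreimageCount F F' s z ∂μ = ∫ q in s, φ (F q) * (F' q).det ∂μ := by
  have hcount {P : Set E} (hP : MeasurableSet P) (hdet : ∀ q ∈ P, (F' q).det ≠ 0) :
      Integrable (fun z ↦ φ z * (s ∩ P ∩ F ⁻¹' {z}).ncard) μ ∧
      ∫ z, φ z * (s ∩ P ∩ F ⁻¹' {z}).ncard ∂μ = ∫ q in s ∩ P, φ (F q) * |(F' q).det| ∂μ := by
    have hFP : ∀ q ∈ s ∩ P, HasFDerivWithinAt F (F' q) (s ∩ P) q :=
      fun q hq ↦ (hF q hq.1).mono Set.inter_subset_left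
    have hintP := hint.mono_set (Set.inter_subset_left (t := P))
    exact ⟨(integrable_ncard_inter_preimage (hs.inter hP) hFP (fun q hq ↦ hdet q hq.2)
      hintP).bdd_mul hφ.aestronglyMeasurable (ae_of_all _ hφC),
      integral_mul_ncard_inter_preimage (hs.inter hP) hFP (fun q hq ↦ hdet q hq.2) hintP hφ⟩
  have hpos := hcount (measurableSet_lt measurable_const hF') fun q hq ↦ ne_of_gt hq
  have hneg := hcount (measurableSet_lt hF' measurable_const) fun q hq ↦ ne_of_lt hq
  have hFm : AEMeasurable F (μ.restrict s) :=
    ContinuousOn.aemeasurable (fun q hq ↦ (hF q hq).continuousWithinAt) hs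
  have hφF : IntegrableOn (fun q ↦ φ (F q) * (F' q).det) s μ :=
    Integrable.bdd_mul hint (hφ.comp_aemeasurable hFm).aestronglyMeasurable
      (ae_of_all _ fun q ↦ hφC _)
  rw [setIntegral_mul_eq_sub_abs hs hF' hφF, ← hpos.2, ← hneg.2,
    ← integral_sub hpos.1 hneg.1]
  simp [signedPreimageCount, mul_sub]

end AreaFormula

/-! ### The cone over a parametrised surface -/

section NullLagrangian

variable {E F G W : Type*} [NormedAddCommGroup E] [NormedSpace ℝ E] [NormedAddCommGroup F]
  [NormedSpace ℝ F] [NormedAddCommGroup G] [NormedSpace ℝ G] [NormedAddCommGroup W]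
  [NormedSpace ℝ W] [FiniteDimensional ℝ E] [MeasurableSpace E] [BorelSpace E]
  {μ : Measure E} [μ.IsAddHaarMeasure]

theorem integral_bilinear_fderiv_fderiv_comm (B : F →L[ℝ] G →L[ℝ] W) {a : E → F} {b : E → G}
    (ha : ContDiff ℝ 1 a) (hac : HasCompactSupport a) (hb : ContDiff ℝ 2 b) (v w : E) :
    ∫ x, B (fderiv ℝ a x v) (fderiv ℝ b x w) ∂μ = ∫ x, B (fderiv ℝ a x w) (fderiv ℝ b x v) ∂μ := by
  have hb' : ContDiff ℝ 1 (fderiv ℝ b) := hb.fderiv_right (by norm_num)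
  have ha' := ha.continuous_fderiv one_ne_zero
  have hb'' := hb'.continuous_fderiv one_ne_zero
  have hint {α : E → F} {β : E → G} (hα : Continuous α) (hαc : ∀ x ∉ tsupport a, α x = 0)
      (hβ : Continuous β) : Integrable (fun x ↦ B (α x) (β x)) μ :=
    ((B.continuous.comp hα).clm_apply hβ).integrable_of_hasCompactSupport
      (HasCompactSupport.intro hac fun x hx ↦ by simp [hαc x hx])
  have ha0 (v : E) : ∀ x ∉ tsupport a, fderiv ℝ a x v = 0 := fun x hx ↦ by
    simp [fderiv_of_notMem_tsupport ℝ hx]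
  have hparts (v w : E) : ∫ x, B (a x) (fderiv ℝ (fderiv ℝ b) x v w) ∂μ =
      -∫ x, B (fderiv ℝ a x v) (fderiv ℝ b x w) ∂μ :=
    integral_bilinear_hasLineDerivAt_right_eq_neg_left_of_integrable
      (hint (ha'.clm_apply continuous_const) (ha0 v) (hb'.continuous.clm_apply continuous_const))
      (hint ha.continuous (fun _ ↦ image_eq_zero_of_notMem_tsupport)
        ((hb''.clm_apply continuous_const).clm_apply continuous_const))
      (hint ha.continuous (fun _ ↦ image_eq_zero_of_notMem_tsupport)
        (hb'.continuous.clm_apply continuous_const))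
      (fun x _ ↦ (ha.differentiable one_ne_zero x).hasFDerivAt.hasLineDerivAt v)
      fun x _ ↦ (((hb'.differentiable one_ne_zero x).hasFDerivAt.clm_apply
        (hasFDerivAt_const w x)).hasLineDerivAt v).congr_deriv (by simp)
  have hsymm (x : E) : fderiv ℝ (fderiv ℝ b) x v w = fderiv ℝ (fderiv ℝ b) x w v :=
    hb.contDiffAt.isSymmSndFDerivAt (by simp) v w
  rw [← neg_inj, ← hparts, ← hparts]
  simp only [hsymm]

end NullLagrangian

theorem dot3_eq_dotProduct (a b : Fin 3 → ℝ) : dot3 a b = a ⬝ᵥ b := rfl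

theorem triple_product_smul_eq (e v x y : Fin 3 → ℝ) :
    (v ⬝ᵥ x ⨯₃ y) • e = (e ⬝ᵥ x ⨯₃ y) • v - (e ⬝ᵥ v ⨯₃ y) • x + (e ⬝ᵥ v ⨯₃ x) • y := by
  simp_rw [cross_apply, Matrix.vec3_dotProduct]
  ext i
  fin_cases i <;> simp <;> ring

theorem continuous_cross {α : Type*} [TopologicalSpace α] {f g : α → Fin 3 → ℝ}
    (hf : Continuous f) (hg : Continuous g) : Continuous fun x ↦ f x ⨯₃ g x :=
  ((crossProduct (R := ℝ)).toContinuousBilinearMap.continuous.comp hf).clm_apply hg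

/-- The normal `u_x ∧ u_y` of a parametrised surface; its length is the area density. -/
noncomputable def surfaceNormal (u : ℝ × ℝ → Fin 3 → ℝ) (p : ℝ × ℝ) : Fin 3 → ℝ :=
  pderivX u p ⨯₃ pderivY u p

section SurfaceNormal

variable {u : ℝ × ℝ → Fin 3 → ℝ}

theorem continuous_pderivX (hu : ContDiff ℝ 1 u) : Continuous (pderivX u) :=
  (hu.continuous_fderiv one_ne_zero).clm_apply continuous_const

theorem continuous_pderivY (hu : ContDiff ℝ 1 u) : Continuous (pderivY u) :=
  (hu.continuous_fderiv one_ne_zero).clm_apply continuous_const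

theorem pderivX_eq_zero {p : ℝ × ℝ} (hp : p ∉ tsupport u) : pderivX u p = 0 := by
  simp [pderivX, fderiv_of_notMem_tsupport ℝ hp]

theorem pderivY_eq_zero {p : ℝ × ℝ} (hp : p ∉ tsupport u) : pderivY u p = 0 := by
  simp [pderivY, fderiv_of_notMem_tsupport ℝ hp]

theorem continuous_surfaceNormal (hu : ContDiff ℝ 1 u) : Continuous (surfaceNormal u) :=
  continuous_cross (continuous_pderivX hu) (continuous_pderivY hu)

theorem surfaceNormal_eq_zero {p : ℝ × ℝ} (hp : p ∉ tsupport u) : surfaceNormal u p = 0 := by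
  simp [surfaceNormal, pderivX_eq_zero hp]

theorem pderivX_smul (t : ℝ) : pderivX (t • u) = t • pderivX u := by
  ext1 p
  simp [pderivX, fderiv_const_smul_field]

theorem pderivY_smul (t : ℝ) : pderivY (t • u) = t • pderivY u := by
  ext1 p
  simp [pderivY, fderiv_const_smul_field]

theorem surfaceNormal_smul (t : ℝ) : surfaceNormal (t • u) = t ^ 2 • surfaceNormal u := by
  ext1 p
  simp [surfaceNormal, pderivX_smul, pderivY_smul, smul_smul, sq]

theorem integral_dotProduct_cross_pderiv_comm {a : ℝ × ℝ → Fin 3 → ℝ} (ha : ContDiff ℝ 1 a)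
    (hac : HasCompactSupport a) (hu : ContDiff ℝ 2 u) (e : Fin 3 → ℝ) :
    ∫ p, e ⬝ᵥ pderivX a p ⨯₃ pderivY u p = ∫ p, e ⬝ᵥ pderivY a p ⨯₃ pderivX u p :=
  integral_bilinear_fderiv_fderiv_comm (μ := volume)
    (crossProduct.compr₂ (dotProductBilin ℝ ℝ e)).toContinuousBilinearMap ha hac hu (1, 0) (0, 1)

theorem fderiv_comp_smul_self {φ : (Fin 3 → ℝ) → ℝ} (hφ : Differentiable ℝ φ)
    (hu : Differentiable ℝ u) (p v : ℝ × ℝ) : fderiv ℝ (fun p ↦ φ (u p) • u p) p v =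
      φ (u p) • fderiv ℝ u p v + fderiv ℝ φ (u p) (fderiv ℝ u p v) • u p := by
  have hcomp := (hφ (u p)).hasFDerivAt.comp p (hu p).hasFDerivAt
  exact congr($((hcomp.smul (hu p).hasFDerivAt).fderiv) v)

theorem fderiv_mul_dotProduct_surfaceNormal_eq {φ : (Fin 3 → ℝ) → ℝ} (hφ : Differentiable ℝ φ)
    (hu : Differentiable ℝ u) (e : Fin 3 → ℝ) (p : ℝ × ℝ) :
    fderiv ℝ φ (u p) e * (u p ⬝ᵥ surfaceNormal u p) =
      (fderiv ℝ φ (u p) (u p) + 2 * φ (u p)) * (e ⬝ᵥ surfaceNormal u p) -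
        (e ⬝ᵥ pderivX (fun p ↦ φ (u p) • u p) p ⨯₃ pderivY u p -
          e ⬝ᵥ pderivY (fun p ↦ φ (u p) • u p) p ⨯₃ pderivX u p) := by
  have hφe := congr(fderiv ℝ φ (u p)
    $(triple_product_smul_eq e (u p) (pderivX u p) (pderivY u p)))
  have hX : pderivX (fun p ↦ φ (u p) • u p) p =
      φ (u p) • pderivX u p + fderiv ℝ φ (u p) (pderivX u p) • u p :=
    fderiv_comp_smul_self hφ hu p _
  have hY : pderivY (fun p ↦ φ (u p) • u p) p =
      φ (u p) • pderivY u p + fderiv ℝ φ (u p) (pderivY u p) • u p :=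
    fderiv_comp_smul_self hφ hu p _
  simp only [hX, hY, surfaceNormal, map_add, map_sub, map_smul, LinearMap.add_apply,
    LinearMap.smul_apply, dotProduct_add, dotProduct_smul, smul_eq_mul,
    ← cross_anticomm (pderivX u p) (pderivY u p), dotProduct_neg] at hφe ⊢
  linear_combination hφe

theorem integral_fderiv_mul_dotProduct_surfaceNormal (hu : ContDiff ℝ 2 u)
    (huc : HasCompactSupport u) {φ : (Fin 3 → ℝ) → ℝ} (hφ : ContDiff ℝ 1 φ) (e : Fin 3 → ℝ) :
    ∫ p, fderiv ℝ φ (u p) e * (u p ⬝ᵥ surfaceNormal u p) =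
      ∫ p, (fderiv ℝ φ (u p) (u p) + 2 * φ (u p)) * (e ⬝ᵥ surfaceNormal u p) := by
  have hu1 : ContDiff ℝ 1 u := hu.of_le one_le_two
  have ha : ContDiff ℝ 1 fun p ↦ φ (u p) • u p := (hφ.comp hu1).smul hu1
  have hac : HasCompactSupport fun p ↦ φ (u p) • u p := huc.smul_left (f := fun p ↦ φ (u p))
  have hsupp {g : ℝ × ℝ → ℝ} (hg : Continuous g) (hg0 : ∀ p ∉ tsupport u, g p = 0) :
      Integrable g :=
    hg.integrable_of_hasCompactSupport (HasCompactSupport.intro huc hg0)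
  have hXY := hsupp (continuous_const (y := e) |>.dotProduct
    (continuous_cross (continuous_pderivX ha) (continuous_pderivY hu1))) fun p hp ↦ by
      simp [pderivY_eq_zero hp]
  have hYX := hsupp (continuous_const (y := e) |>.dotProduct
    (continuous_cross (continuous_pderivY ha) (continuous_pderivX hu1))) fun p hp ↦ by
      simp [pderivX_eq_zero hp]
  have hmain : Integrable fun p ↦
      (fderiv ℝ φ (u p) (u p) + 2 * φ (u p)) * (e ⬝ᵥ surfaceNormal u p) := by
    have hφ0 := hφ.continuous.comp hu.continuous
    have hφ1 := ((hφ.continuous_fderiv one_ne_zero).comp hu.continuous).clm_apply hu.continuous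
    exact hsupp ((hφ1.add (continuous_const.mul hφ0)).mul
      (continuous_const.dotProduct (continuous_surfaceNormal hu1)))
      fun p hp ↦ by simp [surfaceNormal_eq_zero hp]
  simp only [fderiv_mul_dotProduct_surfaceNormal_eq (hφ.differentiable one_ne_zero)
    (hu1.differentiable one_ne_zero) e]
  rw [integral_sub hmain, integral_sub hXY hYX,
    integral_dotProduct_cross_pderiv_comm ha hac hu, sub_self, sub_zero]
  exact hXY.sub hYX

end SurfaceNormal

section UnitSlab

/-- The coordinates `(l, (x, y))` on `ℝ³ = ℝ × ℝ²`. -/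
def finThreeEquivProd : (Fin 3 → ℝ) ≃ᵐ ℝ × ℝ × ℝ :=
  (MeasurableEquiv.piFinSuccAbove (fun _ ↦ ℝ) 0).trans
    ((MeasurableEquiv.refl ℝ).prodCongr MeasurableEquiv.finTwoArrow)

theorem volume_preserving_finThreeEquivProd : MeasurePreserving finThreeEquivProd :=
  ((MeasurePreserving.id volume).prod (volume_preserving_finTwoArrow ℝ)).comp
    (volume_preserving_piFinSuccAbove (fun _ ↦ ℝ) 0)

/-- The slab `0 < l ≤ 1` of `ℝ³ = ℝ × ℝ²`, the domain of the cone over a surface. -/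
def unitSlab : Set (Fin 3 → ℝ) := finThreeEquivProd ⁻¹' (Set.Ioc 0 1 ×ˢ Set.univ)

theorem measurableSet_unitSlab : MeasurableSet unitSlab :=
  finThreeEquivProd.measurable (measurableSet_Ioc.prod .univ)

variable {g : ℝ × ℝ × ℝ → ℝ} {K : Set (ℝ × ℝ)}

theorem integrableOn_Ioc_prod_univ (hg : Continuous g) (hK : IsCompact K)
    (hgK : ∀ l, ∀ p ∉ K, g (l, p) = 0) : IntegrableOn g (Set.Ioc (0 : ℝ) 1 ×ˢ Set.univ) := by
  refine (hg.continuousOn.integrableOn_compact (isCompact_Icc.prod hK)).of_forall_sdiff_eq_zero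
    (s := Set.Icc (0 : ℝ) 1 ×ˢ K) (measurableSet_Ioc.prod .univ) ?_
  rintro ⟨l, p⟩ ⟨⟨hl, -⟩, hlp⟩
  exact hgK l p fun hp ↦ hlp ⟨⟨hl.1.le, hl.2⟩, hp⟩

theorem integrableOn_unitSlab (hg : Continuous g) (hK : IsCompact K)
    (hgK : ∀ l, ∀ p ∉ K, g (l, p) = 0) :
    IntegrableOn (fun q ↦ g (finThreeEquivProd q)) unitSlab :=
  (volume_preserving_finThreeEquivProd.integrableOn_comp_preimage
    finThreeEquivProd.measurableEmbedding).2 (integrableOn_Ioc_prod_univ hg hK hgK)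

theorem setIntegral_unitSlab (hg : Continuous g) (hK : IsCompact K)
    (hgK : ∀ l, ∀ p ∉ K, g (l, p) = 0) :
    ∫ q in unitSlab, g (finThreeEquivProd q) = ∫ l in Set.Ioc (0 : ℝ) 1, ∫ p, g (l, p) := by
  rw [unitSlab, volume_preserving_finThreeEquivProd.setIntegral_preimage_emb
    finThreeEquivProd.measurableEmbedding, Measure.volume_eq_prod,
    setIntegral_prod g (integrableOn_Ioc_prod_univ hg hK hgK)]
  simp only [Measure.restrict_univ]

theorem setIntegral_integral_comm (hg : Continuous g) (hK : IsCompact K)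
    (hgK : ∀ l, ∀ p ∉ K, g (l, p) = 0) :
    ∫ l in Set.Ioc (0 : ℝ) 1, ∫ p, g (l, p) = ∫ p, ∫ l in (0 : ℝ)..1, g (l, p) := by
  simp only [intervalIntegral.integral_of_le zero_le_one]
  refine integral_integral_swap (f := fun l p ↦ g (l, p)) ?_
  rw [← Measure.restrict_univ (μ := (volume : Measure (ℝ × ℝ))), Measure.prod_restrict]
  exact integrableOn_Ioc_prod_univ hg hK hgK

end UnitSlab

/-- The cone with vertex `0` over the surface `u`, in the coordinates `(l, x, y)` of `ℝ³`. -/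
def cone (u : ℝ × ℝ → Fin 3 → ℝ) (q : Fin 3 → ℝ) : Fin 3 → ℝ := q 0 • u (q 1, q 2)

section Cone

variable {u : ℝ × ℝ → Fin 3 → ℝ}

theorem contDiff_cone {n : ℕ∞ω} (hu : ContDiff ℝ n u) : ContDiff ℝ n (cone u) :=
  (contDiff_apply ℝ ℝ 0).smul
    (hu.comp ((contDiff_apply ℝ ℝ 1).prodMk (contDiff_apply ℝ ℝ 2)))

theorem det_fderiv_cone (hu : Differentiable ℝ u) (q : Fin 3 → ℝ) :
    (fderiv ℝ (cone u) q).det = q 0 ^ 2 * (u (q 1, q 2) ⬝ᵥ surfaceNormal u (q 1, q 2)) := by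
  have hproj (i : Fin 3) : HasFDerivAt (fun q : Fin 3 → ℝ ↦ q i) (.proj i) q :=
    (ContinuousLinearMap.proj (R := ℝ) (φ := fun _ : Fin 3 ↦ ℝ) i).hasFDerivAt
  have hcone := (hproj 0).smul ((hu (q 1, q 2)).hasFDerivAt.comp q ((hproj 1).prodMk (hproj 2)))
  rw [show fderiv ℝ (cone u) q = _ from hcone.fderiv, ContinuousLinearMap.det,
    ← LinearMap.det_toMatrix', Matrix.det_fin_three, Matrix.vec3_dotProduct]
  have h0 : fderiv ℝ u (q 1, q 2) (0, 0) = 0 := map_zero _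
  simp [LinearMap.toMatrix'_apply, surfaceNormal, cross_apply, pderivX, pderivY, h0]
  ring

theorem continuous_sq_mul_dotProduct_surfaceNormal (hu : ContDiff ℝ 1 u) :
    Continuous fun x : ℝ × ℝ × ℝ ↦ x.1 ^ 2 * (u x.2 ⬝ᵥ surfaceNormal u x.2) :=
  (continuous_fst.pow 2).mul ((hu.continuous.comp continuous_snd).dotProduct
    ((continuous_surfaceNormal hu).comp continuous_snd))

theorem integrableOn_det_fderiv_cone (hu : ContDiff ℝ 1 u) (huc : HasCompactSupport u) :
    IntegrableOn (fun q ↦ (fderiv ℝ (cone u) q).det) unitSlab := by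
  simp only [det_fderiv_cone (hu.differentiable one_ne_zero)]
  exact integrableOn_unitSlab (continuous_sq_mul_dotProduct_surfaceNormal hu) huc fun l p hp ↦ by
    simp [surfaceNormal_eq_zero hp]

theorem setIntegral_det_fderiv_cone (hu : ContDiff ℝ 1 u) (huc : HasCompactSupport u) :
    ∫ q in unitSlab, (fderiv ℝ (cone u) q).det = (∫ p, u p ⬝ᵥ surfaceNormal u p) / 3 := by
  simp only [det_fderiv_cone (hu.differentiable one_ne_zero)]
  refine (setIntegral_unitSlab (continuous_sq_mul_dotProduct_surfaceNormal hu) huc fun l p hp ↦ by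
    simp [surfaceNormal_eq_zero hp]).trans ?_
  simp only [integral_const_mul]
  rw [integral_mul_const, ← intervalIntegral.integral_of_le zero_le_one, integral_pow]
  norm_num
  ring

theorem integral_fderiv_smul_mul_sq_mul_dotProduct (hu : ContDiff ℝ 2 u)
    (huc : HasCompactSupport u) {φ : (Fin 3 → ℝ) → ℝ} (hφ : ContDiff ℝ 1 φ) (e : Fin 3 → ℝ)
    {l : ℝ} (hl : l ≠ 0) :
    ∫ p, fderiv ℝ φ (l • u p) e * (l ^ 2 * (u p ⬝ᵥ surfaceNormal u p)) =
      ∫ p, (fderiv ℝ φ (l • u p) (u p) * l ^ 2 + φ (l • u p) * (2 * l)) *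
        (e ⬝ᵥ surfaceNormal u p) := by
  have h := integral_fderiv_mul_dotProduct_surfaceNormal (hu.const_smul l)
    (huc.smul_left (f := fun _ ↦ l)) hφ e
  simp only [← Pi.smul_def, surfaceNormal_smul, Pi.smul_apply, smul_dotProduct, dotProduct_smul,
    map_smul, smul_eq_mul] at h
  rw [← mul_right_inj' hl, ← integral_const_mul, ← integral_const_mul]
  refine (congrArg _ ?_).trans (h.trans (congrArg _ ?_)) <;> ext p <;> ring

theorem intervalIntegral_fderiv_smul_mul_sq_add {φ : (Fin 3 → ℝ) → ℝ} (hφ : ContDiff ℝ 1 φ)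
    (v : Fin 3 → ℝ) :
    ∫ l in (0 : ℝ)..1, (fderiv ℝ φ (l • v) v * l ^ 2 + φ (l • v) * (2 * l)) = φ v := by
  have hline : Continuous fun l : ℝ ↦ l • v := by fun_prop
  have hderiv (l : ℝ) : HasDerivAt (fun l ↦ φ (l • v) * l ^ 2)
      (fderiv ℝ φ (l • v) v * l ^ 2 + φ (l • v) * (2 * l)) l := by
    have hφl := (hφ.differentiable one_ne_zero (l • v)).hasFDerivAt.comp_hasDerivAt l
      ((hasDerivAt_id l).smul_const v)
    exact (hφl.mul (hasDerivAt_pow 2 l)).congr_deriv (by simp)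
  have hcont : Continuous fun l : ℝ ↦ fderiv ℝ φ (l • v) v * l ^ 2 + φ (l • v) * (2 * l) :=
    ((((hφ.continuous_fderiv one_ne_zero).comp hline).clm_apply continuous_const).mul
      (continuous_pow 2)).add ((hφ.continuous.comp hline).mul (by fun_prop))
  rw [intervalIntegral.integral_eq_sub_of_hasDerivAt (fun l _ ↦ hderiv l)
    (hcont.intervalIntegrable _ _)]
  simp

/-- Stokes' theorem: with `F = cone u`, both sides are the integral of `dφ ∧ ι_e (dz₁ ∧ dz₂ ∧ dz₃)`
pulled back by `F`. -/
theorem setIntegral_fderiv_cone_mul_det (hu : ContDiff ℝ 2 u) (huc : HasCompactSupport u)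
    {φ : (Fin 3 → ℝ) → ℝ} (hφ : ContDiff ℝ 1 φ) (e : Fin 3 → ℝ) :
    ∫ q in unitSlab, fderiv ℝ φ (cone u q) e * (fderiv ℝ (cone u) q).det =
      ∫ p, φ (u p) * (e ⬝ᵥ surfaceNormal u p) := by
  have hu1 : ContDiff ℝ 1 u := hu.of_le one_le_two
  have hu2 : Continuous fun x : ℝ × ℝ × ℝ ↦ u x.2 := hu.continuous.comp continuous_snd
  have hN : Continuous fun x : ℝ × ℝ × ℝ ↦ e ⬝ᵥ surfaceNormal u x.2 :=
    continuous_const.dotProduct ((continuous_surfaceNormal hu1).comp continuous_snd)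
  have hline : Continuous fun x : ℝ × ℝ × ℝ ↦ x.1 • u x.2 := continuous_fst.smul hu2
  have hφ' := (hφ.continuous_fderiv one_ne_zero).comp hline
  simp only [det_fderiv_cone (hu1.differentiable one_ne_zero)]
  calc ∫ q in unitSlab, fderiv ℝ φ (cone u q) e *
        (q 0 ^ 2 * (u (q 1, q 2) ⬝ᵥ surfaceNormal u (q 1, q 2)))
      = ∫ l in Set.Ioc (0 : ℝ) 1, ∫ p, fderiv ℝ φ (l • u p) e *
          (l ^ 2 * (u p ⬝ᵥ surfaceNormal u p)) :=
        setIntegral_unitSlab ((hφ'.clm_apply continuous_const).mul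
          (continuous_sq_mul_dotProduct_surfaceNormal hu1)) huc fun l p hp ↦ by
            simp [surfaceNormal_eq_zero hp]
    _ = ∫ l in Set.Ioc (0 : ℝ) 1, ∫ p, (fderiv ℝ φ (l • u p) (u p) * l ^ 2 +
          φ (l • u p) * (2 * l)) * (e ⬝ᵥ surfaceNormal u p) :=
        setIntegral_congr_fun measurableSet_Ioc fun l hl ↦
          integral_fderiv_smul_mul_sq_mul_dotProduct hu huc hφ e hl.1.ne'
    _ = ∫ p, ∫ l in (0 : ℝ)..1, (fderiv ℝ φ (l • u p) (u p) * l ^ 2 +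
          φ (l • u p) * (2 * l)) * (e ⬝ᵥ surfaceNormal u p) :=
        setIntegral_integral_comm (g := fun x ↦ (fderiv ℝ φ (x.1 • u x.2) (u x.2) * x.1 ^ 2 +
            φ (x.1 • u x.2) * (2 * x.1)) * (e ⬝ᵥ surfaceNormal u x.2))
          ((((hφ'.clm_apply hu2).mul (continuous_fst.pow 2)).add
          ((hφ.continuous.comp hline).mul (continuous_const.mul continuous_fst))).mul hN) huc
          fun l p hp ↦ by simp [surfaceNormal_eq_zero hp]
    _ = ∫ p, φ (u p) * (e ⬝ᵥ surfaceNormal u p) := by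
        simp only [intervalIntegral.integral_mul_const, intervalIntegral_fderiv_smul_mul_sq_add hφ]

end Cone

/-! ### The isoperimetric inequality for parametrised surfaces -/

section Euclidean

variable {ι : Type*} [Fintype ι]

theorem dotProduct_self_eq_norm_toLp_sq (a : ι → ℝ) : a ⬝ᵥ a = ‖WithLp.toLp 2 a‖ ^ 2 := by
  rw [← real_inner_self_eq_norm_sq, EuclideanSpace.inner_toLp_toLp, star_trivial]

theorem enorm_dotProduct_le (a b : ι → ℝ) :
    ‖a ⬝ᵥ b‖ₑ ≤ ‖WithLp.toLp 2 a‖ₑ * ‖WithLp.toLp 2 b‖ₑ := by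
  rw [← ofReal_norm (WithLp.toLp 2 a), ← ofReal_norm (WithLp.toLp 2 b),
    ← ENNReal.ofReal_mul (norm_nonneg _), ← ofReal_norm, dotProduct_comm]
  exact ENNReal.ofReal_le_ofReal (norm_inner_le_norm (𝕜 := ℝ) (WithLp.toLp 2 a) (WithLp.toLp 2 b))

theorem isBounded_toLp_preimage_ball (r : ℝ) :
    Bornology.IsBounded ((WithLp.toLp 2 : (ι → ℝ) → EuclideanSpace ℝ ι) ⁻¹' Metric.ball 0 r) :=
  (PiLp.antilipschitzWith_toLp 2 fun _ : ι ↦ ℝ).isBounded_preimage Metric.isBounded_ball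

end Euclidean

theorem volume_toLp_preimage_ball :
    volume ((WithLp.toLp 2 : (Fin 3 → ℝ) → EuclideanSpace ℝ (Fin 3)) ⁻¹' Metric.ball 0 1) =
      ENNReal.ofReal (4 * π / 3) := by
  rw [(PiLp.volume_preserving_toLp (Fin 3)).measure_preimage
    Metric.isOpen_ball.measurableSet.nullMeasurableSet, EuclideanSpace.volume_ball_fin_three]
  norm_num
  ring_nf

theorem enorm_integral_intCast_le_lintegral_rpow {α : Type*} [MeasurableSpace α] {μ : Measure α}
    (f : α → ℤ) {p : ℝ} (hp : 1 ≤ p) :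
    ‖∫ x, (f x : ℝ) ∂μ‖ₑ ≤ ∫⁻ x, ‖(f x : ℝ)‖ₑ ^ p ∂μ := by
  refine (enorm_integral_le_lintegral_enorm _).trans (lintegral_mono fun x ↦ ?_)
  obtain hx | hx := eq_or_ne (f x) 0
  · simp [hx]
  · have hone : 1 ≤ ‖(f x : ℝ)‖ₑ := by
      rw [← enorm_one (G := ℝ), enorm_le_iff_norm_le, norm_one, Real.norm_eq_abs]
      exact_mod_cast Int.one_le_abs hx
    exact ENNReal.le_rpow_self_of_one_le hone hp

section ConeDegree

variable {u : ℝ × ℝ → Fin 3 → ℝ}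

/-- The degree at `z` of the cone over the surface `u`: how often the cone covers `z`, with sign. -/
noncomputable def coneDegree (u : ℝ × ℝ → Fin 3 → ℝ) : (Fin 3 → ℝ) → ℤ :=
  signedPreimageCount (cone u) (fderiv ℝ (cone u)) unitSlab

/-- The area of the surface `u`, as a measure on `ℝ³`. -/
noncomputable def surfaceMeasure (u : ℝ × ℝ → Fin 3 → ℝ) : Measure (Fin 3 → ℝ) :=
  (volume.withDensity fun p ↦ ‖WithLp.toLp 2 (surfaceNormal u p)‖ₑ).map u

instance : SFinite (surfaceMeasure u) :=
  inferInstanceAs (SFinite (Measure.map u _))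

theorem hasFDerivWithinAt_cone (hu : ContDiff ℝ 1 u) (q : Fin 3 → ℝ) :
    HasFDerivWithinAt (cone u) (fderiv ℝ (cone u) q) unitSlab q :=
  ((contDiff_cone hu).differentiable one_ne_zero q).hasFDerivAt.hasFDerivWithinAt

theorem measurable_det_fderiv_cone (hu : ContDiff ℝ 1 u) :
    Measurable fun q ↦ (fderiv ℝ (cone u) q).det :=
  (ContinuousLinearMap.continuous_det.comp
    ((contDiff_cone hu).continuous_fderiv one_ne_zero)).measurable

theorem integrable_coneDegree (hu : ContDiff ℝ 1 u) (huc : HasCompactSupport u) :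
    Integrable fun z ↦ (coneDegree u z : ℝ) :=
  integrable_signedPreimageCount measurableSet_unitSlab (fun q _ ↦ hasFDerivWithinAt_cone hu q)
    (measurable_det_fderiv_cone hu) (integrableOn_det_fderiv_cone hu huc)

theorem integral_mul_coneDegree (hu : ContDiff ℝ 1 u) (huc : HasCompactSupport u)
    {φ : (Fin 3 → ℝ) → ℝ} (hφ : Measurable φ) {C : ℝ} (hφC : ∀ z, ‖φ z‖ ≤ C) :
    ∫ z, φ z * coneDegree u z = ∫ q in unitSlab, φ (cone u q) * (fderiv ℝ (cone u) q).det :=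
  integral_mul_signedPreimageCount measurableSet_unitSlab (fun q _ ↦ hasFDerivWithinAt_cone hu q)
    (measurable_det_fderiv_cone hu) (integrableOn_det_fderiv_cone hu huc) hφ hφC

theorem integral_coneDegree (hu : ContDiff ℝ 1 u) (huc : HasCompactSupport u) :
    ∫ z, (coneDegree u z : ℝ) = (∫ p, u p ⬝ᵥ surfaceNormal u p) / 3 := by
  rw [← setIntegral_det_fderiv_cone hu huc]
  simpa using integral_mul_coneDegree hu huc (measurable_const (a := (1 : ℝ))) fun _ ↦ le_rfl

theorem hasCompactSupport_coneDegree (hu : Continuous u) (huc : HasCompactSupport u) :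
    HasCompactSupport fun z ↦ (coneDegree u z : ℝ) := by
  have hline : Continuous fun x : ℝ × ℝ × ℝ ↦ x.1 • u x.2 := by fun_prop
  refine HasCompactSupport.intro
    (((isCompact_Icc (a := (0 : ℝ)) (b := 1)).prod huc).image hline |>.insert 0) fun z hz ↦ ?_
  rw [coneDegree, signedPreimageCount_eq_zero, Int.cast_zero]
  rintro ⟨q, hq, rfl⟩
  by_cases hp : (q 1, q 2) ∈ tsupport u
  · exact hz (.inr ⟨(q 0, q 1, q 2), ⟨Set.Ioc_subset_Icc_self hq.1, hp⟩, rfl⟩)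
  · exact hz (.inl (by rw [cone, image_eq_zero_of_notMem_tsupport hp, smul_zero]))

theorem lintegral_surfaceMeasure (hu : ContDiff ℝ 1 u) {f : (Fin 3 → ℝ) → ℝ≥0∞}
    (hf : Measurable f) : ∫⁻ z, f z ∂surfaceMeasure u =
      ∫⁻ p, ‖WithLp.toLp 2 (surfaceNormal u p)‖ₑ * f (u p) := by
  have hN : Measurable fun p ↦ ‖WithLp.toLp 2 (surfaceNormal u p)‖ₑ :=
    ((PiLp.continuous_toLp 2 _).comp (continuous_surfaceNormal hu)).enorm.measurable
  rw [surfaceMeasure, lintegral_map hf hu.continuous.measurable]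
  exact lintegral_withDensity_eq_lintegral_mul _ hN (hf.comp hu.continuous.measurable)

theorem integrable_norm_surfaceNormal (hu : ContDiff ℝ 1 u) (huc : HasCompactSupport u) :
    Integrable fun p ↦ ‖WithLp.toLp 2 (surfaceNormal u p)‖ :=
  have hN := ((PiLp.continuous_toLp 2 _).comp (continuous_surfaceNormal hu)).norm
  hN.integrable_of_hasCompactSupport
    (HasCompactSupport.intro huc fun p hp ↦ by simp [surfaceNormal_eq_zero hp])

theorem surfaceMeasure_univ (hu : ContDiff ℝ 1 u) (huc : HasCompactSupport u) :
    surfaceMeasure u Set.univ =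
      ENNReal.ofReal (∫ p, ‖WithLp.toLp 2 (surfaceNormal u p)‖) := by
  rw [← lintegral_one, lintegral_surfaceMeasure hu measurable_const,
    ofReal_integral_eq_lintegral_ofReal (integrable_norm_surfaceNormal hu huc)
      (ae_of_all _ fun p ↦ norm_nonneg _)]
  simp only [mul_one, ofReal_norm]

theorem isVariationBound_coneDegree (hu : ContDiff ℝ 2 u) (huc : HasCompactSupport u) :
    IsVariationBound volume (WithLp.toLp 2 ⁻¹' Metric.ball (0 : EuclideanSpace ℝ (Fin 3)) 1)
      (fun z ↦ coneDegree u z) (surfaceMeasure u) := by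
  intro φ hφ hφc k hk
  have hu1 : ContDiff ℝ 1 u := hu.of_le one_le_two
  have hφ' : Continuous fun z ↦ fderiv ℝ φ z k :=
    (hφ.continuous_fderiv (by simp)).clm_apply continuous_const
  obtain ⟨C, hC⟩ := (hφc.fderiv_apply ℝ k).exists_bound_of_continuous hφ'
  rw [integral_mul_coneDegree hu1 huc hφ'.measurable hC,
    setIntegral_fderiv_cone_mul_det hu huc (hφ.of_le (by simp)) k,
    lintegral_surfaceMeasure hu1 hφ.continuous.enorm.measurable]
  refine (enorm_integral_le_lintegral_enorm _).trans (lintegral_mono fun p ↦ ?_)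
  have hk1 : ‖WithLp.toLp 2 k‖ₑ ≤ 1 := by
    rw [← enorm_one (G := ℝ), enorm_le_iff_norm_le, norm_one]
    exact (mem_ball_zero_iff.1 hk).le
  rw [enorm_mul, mul_comm]
  gcongr
  exact (enorm_dotProduct_le _ _).trans (mul_le_of_le_one_left' hk1)

theorem rpow_le_surfaceMeasure_univ (hu : ContDiff ℝ 2 u) (huc : HasCompactSupport u) :
    3 * ENNReal.ofReal (4 * π / 3) ^ (3 : ℝ)⁻¹ *
      ‖(∫ p, u p ⬝ᵥ surfaceNormal u p) / 3‖ₑ ^ (3 / 2 : ℝ)⁻¹ ≤ surfaceMeasure u Set.univ := by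
  have hu1 : ContDiff ℝ 1 u := hu.of_le one_le_two
  have hp : (Module.finrank ℝ (Fin 3 → ℝ) : ℝ).HolderConjugate (3 / 2) := by
    rw [Module.finrank_fin_fun, Real.holderConjugate_iff]
    norm_num
  have hvar := (isVariationBound_coneDegree hu huc).lintegral_rpow_le hp
    (Metric.isOpen_ball.measurableSet.preimage (PiLp.continuous_toLp 2 _).measurable)
    (isBounded_toLp_preimage_ball 1) (integrable_coneDegree hu1 huc).locallyIntegrable
    (hasCompactSupport_coneDegree hu.continuous huc)
  rw [volume_toLp_preimage_ball, Module.finrank_fin_fun, Nat.cast_ofNat, Nat.cast_ofNat] at hvar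
  refine le_trans ?_ hvar
  rw [← integral_coneDegree hu1 huc]
  gcongr
  exact enorm_integral_intCast_le_lintegral_rpow (coneDegree u) (by norm_num)

end ConeDegree

theorem isoperimetric_inequality {u : ℝ × ℝ → Fin 3 → ℝ} (hu : ContDiff ℝ 2 u)
    (huc : HasCompactSupport u) :
    4 * π * (∫ p, u p ⬝ᵥ surfaceNormal u p) ^ 2 ≤
      (∫ p, ‖WithLp.toLp 2 (surfaceNormal u p)‖) ^ 3 := by
  have hiso := rpow_le_surfaceMeasure_univ hu huc
  rw [surfaceMeasure_univ (hu.of_le one_le_two) huc] at hiso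
  set V := ∫ p, u p ⬝ᵥ surfaceNormal u p
  have hA : 0 ≤ ∫ p, ‖WithLp.toLp 2 (surfaceNormal u p)‖ := integral_nonneg fun p ↦ norm_nonneg _
  have hball : (ENNReal.ofReal (4 * π / 3) ^ (3 : ℝ)⁻¹) ^ 3 = ENNReal.ofReal (4 * π / 3) :=
    ENNReal.rpow_inv_natCast_pow three_ne_zero _
  have hvol : (‖V / 3‖ₑ ^ (3 / 2 : ℝ)⁻¹) ^ 3 = ENNReal.ofReal (V ^ 2 / 9) := by
    rw [← ENNReal.rpow_mul_natCast, show (3 / 2 : ℝ)⁻¹ * (3 : ℕ) = (2 : ℕ) by norm_num,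
      ENNReal.rpow_natCast, Real.enorm_eq_ofReal_abs, ← ENNReal.ofReal_pow (abs_nonneg _), sq_abs,
      div_pow, show (3 : ℝ) ^ 2 = 9 by norm_num]
  have hcube := pow_le_pow_left' hiso 3
  rw [mul_pow, mul_pow, hball, hvol, ← ENNReal.ofReal_pow hA, ← ENNReal.ofReal_ofNat 3,
    ← ENNReal.ofReal_pow zero_le_three, ← ENNReal.ofReal_mul (by positivity),
    ← ENNReal.ofReal_mul (by positivity), ENNReal.ofReal_le_ofReal_iff (by positivity)] at hcube
  linarith

/-! ### Energy and volume -/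

section Energy

variable {Ω : Set (ℝ × ℝ)} {u : ℝ × ℝ → Fin 3 → ℝ}

theorem dirEnergy_eq_integral_norm_sq (Ω : Set (ℝ × ℝ)) (u : ℝ × ℝ → Fin 3 → ℝ) :
    dirEnergy Ω u = ∫ p in Ω,
      (‖WithLp.toLp 2 (pderivX u p)‖ ^ 2 + ‖WithLp.toLp 2 (pderivY u p)‖ ^ 2) := by
  simp only [dirEnergy, dot3_eq_dotProduct, dotProduct_self_eq_norm_toLp_sq]

theorem dirEnergy_smul (t : ℝ) : dirEnergy Ω (t • u) = t ^ 2 * dirEnergy Ω u := by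
  simp only [dirEnergy, dot3_eq_dotProduct, pderivX_smul, pderivY_smul, Pi.smul_apply,
    smul_dotProduct, dotProduct_smul, smul_eq_mul, ← mul_add, ← mul_assoc, ← sq]
  exact integral_const_mul _ _

theorem vol_eq_setIntegral : vol Ω u = ∫ p in Ω, u p ⬝ᵥ surfaceNormal u p := rfl

theorem vol_smul (t : ℝ) : vol Ω (t • u) = t ^ 3 * vol Ω u := by
  simp only [vol_eq_setIntegral, surfaceNormal_smul, Pi.smul_apply, smul_dotProduct,
    dotProduct_smul, smul_eq_mul, ← mul_assoc]
  exact integral_const_mul _ _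

theorem norm_toLp_cross_le (a b : Fin 3 → ℝ) :
    ‖WithLp.toLp 2 (a ⨯₃ b)‖ ≤ (‖WithLp.toLp 2 a‖ ^ 2 + ‖WithLp.toLp 2 b‖ ^ 2) / 2 := by
  have hcross := cross_dot_cross a b a b
  rw [dotProduct_comm b a] at hcross
  simp only [dotProduct_self_eq_norm_toLp_sq] at hcross
  refine abs_le_of_sq_le_sq' ?_ (by positivity) |>.2
  nlinarith [sq_nonneg (a ⬝ᵥ b), sq_nonneg (‖WithLp.toLp 2 a‖ ^ 2 - ‖WithLp.toLp 2 b‖ ^ 2)]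

theorem vol_eq_integral (hu : tsupport u ⊆ Ω) : vol Ω u = ∫ p, u p ⬝ᵥ surfaceNormal u p :=
  setIntegral_eq_integral_of_forall_compl_eq_zero fun p hp ↦ by
    rw [image_eq_zero_of_notMem_tsupport fun h ↦ hp (hu h), dot3_eq_dotProduct, zero_dotProduct]

theorem dnorm_ne_zero_iff : dnorm Ω u ≠ 0 ↔ 0 < dirEnergy Ω u := by
  rw [dnorm, Real.sqrt_ne_zero']

theorem integral_norm_surfaceNormal_le (hu : ContDiff ℝ 1 u) (huc : HasCompactSupport u)
    (huΩ : tsupport u ⊆ Ω) :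
    ∫ p, ‖WithLp.toLp 2 (surfaceNormal u p)‖ ≤ dirEnergy Ω u / 2 := by
  have hX := ((PiLp.continuous_toLp 2 _).comp (continuous_pderivX hu)).norm.pow 2
  have hY := ((PiLp.continuous_toLp 2 _).comp (continuous_pderivY hu)).norm.pow 2
  have hint := (hX.add hY).integrable_of_hasCompactSupport (μ := volume)
    (HasCompactSupport.intro huc fun p hp ↦ by simp [pderivX_eq_zero hp, pderivY_eq_zero hp])
  rw [dirEnergy_eq_integral_norm_sq, setIntegral_eq_integral_of_forall_compl_eq_zero fun p hp ↦ by
    simp [pderivX_eq_zero fun h ↦ hp (huΩ h), pderivY_eq_zero fun h ↦ hp (huΩ h)],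
    ← integral_div]
  exact integral_mono (integrable_norm_surfaceNormal hu huc) (hint.div_const 2)
    fun p ↦ norm_toLp_cross_le _ _

theorem vol_sq_le_dirEnergy_pow_three (hu : ContDiff ℝ 2 u) (huc : HasCompactSupport u)
    (huΩ : tsupport u ⊆ Ω) : 32 * π * vol Ω u ^ 2 ≤ dirEnergy Ω u ^ 3 := by
  have hiso := isoperimetric_inequality hu huc
  have hle := pow_le_pow_left₀ (integral_nonneg fun p ↦ norm_nonneg _)
    (integral_norm_surfaceNormal_le (hu.of_le one_le_two) huc huΩ) 3
  rw [vol_eq_integral huΩ]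
  linarith [div_pow (dirEnergy Ω u) 2 3]

variable {H δ : ℝ}

theorem Dfun_mul_smul (t : ℝ) : Dfun Ω H (t * δ) (t • u) = t ^ 3 * Dfun Ω H δ u := by
  simp only [Dfun, dirEnergy_smul, vol_smul]
  ring

theorem Efun_sub_Efun_smul (hD : Dfun Ω H δ u = 0) (t : ℝ) :
    Efun Ω H u - Efun Ω H (t • u) = dirEnergy Ω u * ((1 - δ) * t * (1 - t)) +
      dirEnergy Ω u * ((1 - t) ^ 2 * (1 / 2 - δ * (1 - t) / 3)) := by
  simp only [Dfun, Efun, dirEnergy_smul, vol_smul] at hD ⊢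
  linear_combination (1 - t ^ 3) / 3 * hD

theorem rPW_sq_le_dirEnergy (hu : ContDiff ℝ 2 u) (huc : HasCompactSupport u)
    (huΩ : tsupport u ⊆ Ω) (hH : H ≠ 0) (hpos : 0 < dirEnergy Ω u) (hD : Dfun Ω H δ u = 0) :
    rPW H δ ^ 2 ≤ dirEnergy Ω u := by
  have hvol : δ * dirEnergy Ω u = -(2 * H * vol Ω u) := eq_neg_of_add_eq_zero_left hD
  have hr : rPW H δ ^ 2 = 8 * π * δ ^ 2 / H ^ 2 := by
    rw [rPW, div_pow, mul_pow, mul_pow, Real.sq_sqrt (by positivity)]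
    ring
  rw [hr, div_le_iff₀ (by positivity), ← mul_le_mul_iff_right₀ (pow_pos hpos 2)]
  calc dirEnergy Ω u ^ 2 * (8 * π * δ ^ 2) = 8 * π * (δ * dirEnergy Ω u) ^ 2 := by ring
    _ = 32 * π * vol Ω u ^ 2 * H ^ 2 := by rw [hvol]; ring
    _ ≤ dirEnergy Ω u ^ 3 * H ^ 2 := by
        gcongr
        exact vol_sq_le_dirEnergy_pow_three hu huc huΩ
    _ = dirEnergy Ω u ^ 2 * (dirEnergy Ω u * H ^ 2) := by ring

end Energy

theorem depth_strict_increase_general {Ω : Set (ℝ × ℝ)} {H δ' δ'' : ℝ} (h0 : 0 < δ')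
    (h1 : δ' < δ'') (h2 : δ'' ≤ 1) {u : ℝ × ℝ → Fin 3 → ℝ} (hu : ContDiff ℝ 2 u)
    (huc : HasCompactSupport u) (huΩ : tsupport u ⊆ Ω) (hne : dnorm Ω u ≠ 0)
    (hD : Dfun Ω H δ'' u = 0) :
    Dfun Ω H δ' ((δ' / δ'') • u) = 0 ∧ dnorm Ω ((δ' / δ'') • u) ≠ 0 ∧
    (1 - δ'') * (rPW H δ'') ^ 2 * (δ' / δ'') * (1 - δ' / δ'') <
      Efun Ω H u - Efun Ω H ((δ' / δ'') • u) := by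
  have hδ'' : 0 < δ'' := h0.trans h1
  have hδ' : δ' / δ'' * δ'' = δ' := div_mul_cancel₀ _ hδ''.ne'
  set t := δ' / δ''
  have ht0 : 0 < t := div_pos h0 hδ''
  have ht1 : 0 < 1 - t := sub_pos.2 ((div_lt_one hδ'').2 h1)
  have hpos : 0 < dirEnergy Ω u := dnorm_ne_zero_iff.1 hne
  have hH : H ≠ 0 := by
    rintro rfl
    simp [Dfun, hδ''.ne', hpos.ne'] at hD
  have hgap : 0 < 1 / 2 - δ'' * (1 - t) / 3 := by nlinarith
  refine ⟨by rw [← hδ', Dfun_mul_smul, hD, mul_zero], ?_, ?_⟩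
  · rw [dnorm_ne_zero_iff, dirEnergy_smul]
    positivity
  · have hδt : 0 ≤ (1 - δ'') * t * (1 - t) :=
      mul_nonneg (mul_nonneg (sub_nonneg.2 h2) ht0.le) ht1.le
    calc (1 - δ'') * rPW H δ'' ^ 2 * t * (1 - t)
        = rPW H δ'' ^ 2 * ((1 - δ'') * t * (1 - t)) := by ring
      _ ≤ dirEnergy Ω u * ((1 - δ'') * t * (1 - t)) :=
        mul_le_mul_of_nonneg_right (rPW_sq_le_dirEnergy hu huc huΩ hH hpos hD) hδt
      _ < Efun Ω H u - Efun Ω H (t • u) := by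
        rw [Efun_sub_Efun_smul hD]
        exact lt_add_of_pos_right _ (by positivity)

/-- Strict monotonicity of the depth function on `(0,1]`: for
`0 < δ′ < δ″ < 1` and `u` on the δ″-Nehari manifold, the rescaled map
`v = (δ′/δ″)·u` lies on the δ′-Nehari manifold and
`E(u) − E(v) > (1 − δ″)·r(δ″)²·(δ′/δ″)·(1 − δ′/δ″)`. -/
theorem depth_strict_increase (Ω : Set (ℝ × ℝ)) (hΩ : IsOpen Ω)
    (hΩb : Bornology.IsBounded Ω) (H : ℝ) (hH : 0 < H) (δ' δ'' : ℝ)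
    (h0 : 0 < δ') (h1 : δ' < δ'') (h2 : δ'' < 1)
    (u : ℝ × ℝ → Fin 3 → ℝ) (hu : IsAdmissible Ω u)
    (hne : dnorm Ω u ≠ 0) (hD : Dfun Ω H δ'' u = 0) :
    Dfun Ω H δ' ((δ' / δ'') • u) = 0 ∧ dnorm Ω ((δ' / δ'') • u) ≠ 0 ∧
    (1 - δ'') * (rPW H δ'') ^ 2 * (δ' / δ'') * (1 - δ' / δ'') <
      Efun Ω H u - Efun Ω H ((δ' / δ'') • u) :=
  depth_strict_increase_general h0 h1 h2.le (hu.1.of_le (by norm_cast)) hu.2.1 hu.2.2 hne hD
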